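/- Existence and uniqueness for the Dirichlet problem: let Ω ⊂ ℝⁿ be a bounded open set satisfying a uniform exterior cone condition, let g be continuous on ∂Ω, let f be continuous and bounded in Ω, and let M_a be a weighted partial trace operator of class 𝒜. Then the Dirichlet problem M_a(D²u) = f in Ω, u = g on ∂Ω, has a unique viscosity solution u ∈ C(Ω̄). -/

import Mathlib

open Set Metric MeasureTheory Filter

noncomputable section

/-- Euclidean `n`-space `ℝⁿ`. -/
abbrev En (n : ℕ) : Type := EuclideanSpace ℝ (Fin n)

/-- The eigenvalues of a (symmetric) matrix, arranged in nondecreasing order. -/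
noncomputable def sortedEig {n : ℕ} (X : Matrix (Fin n) (Fin n) ℝ) : Fin n → ℝ :=
  if hX : X.IsHermitian then fun i => hX.eigenvalues (Tuple.sort hX.eigenvalues i) else 0

/-- The weighted partial trace operator `M_a(X) = Σ a_i λ_i(X)`. -/
noncomputable def Ma {n : ℕ} (a : Fin n → ℝ) (X : Matrix (Fin n) (Fin n) ℝ) : ℝ :=
  ∑ i, a i * sortedEig X i

/-- The last index of `Fin n`. -/
def lastIdx (n : ℕ) [NeZero n] : Fin n :=
  ⟨n - 1, Nat.sub_lt (Nat.pos_of_ne_zero (NeZero.ne n)) Nat.one_pos⟩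

/-- The class 𝒜̄ : all weights nonnegative, some weight positive. -/
def ClassAbar {n : ℕ} (a : Fin n → ℝ) : Prop := (∀ i, 0 ≤ a i) ∧ ∃ i, 0 < a i

/-- The class 𝒜 : nonnegative weights with `a 1 > 0` and `a n > 0`. -/
def ClassA {n : ℕ} [NeZero n] (a : Fin n → ℝ) : Prop :=
  (∀ i, 0 ≤ a i) ∧ 0 < a 0 ∧ 0 < a (lastIdx n)

/-- The class 𝒜₁ : nonnegative weights with `a 1 > 0`. -/
def ClassA1 {n : ℕ} [NeZero n] (a : Fin n → ℝ) : Prop := (∀ i, 0 ≤ a i) ∧ 0 < a 0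

/-- The class 𝒜ₙ : nonnegative weights with `a n > 0`. -/
def ClassAn {n : ℕ} [NeZero n] (a : Fin n → ℝ) : Prop :=
  (∀ i, 0 ≤ a i) ∧ 0 < a (lastIdx n)

/-- `a* = min (a 1) (a n)`. -/
noncomputable def aStar {n : ℕ} [NeZero n] (a : Fin n → ℝ) : ℝ := min (a 0) (a (lastIdx n))

/-- `â_j = (a 1 + ⋯ + a n) - a j`. -/
noncomputable def hatA {n : ℕ} (a : Fin n → ℝ) (j : Fin n) : ℝ := (∑ i, a i) - a j

/-- The Hessian matrix of `φ` at `x`. -/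
noncomputable def hess {n : ℕ} (φ : En n → ℝ) (x : En n) : Matrix (Fin n) (Fin n) ℝ :=
  fun i j => iteratedFDeriv ℝ 2 φ x ![EuclideanSpace.single i 1, EuclideanSpace.single j 1]

/-- The Hessian matrix of `φ` at `x`, with derivatives taken within `Ω`. -/
noncomputable def hessOn {n : ℕ} (Ω : Set (En n)) (φ : En n → ℝ) (x : En n) :
    Matrix (Fin n) (Fin n) ℝ :=
  fun i j =>
    iteratedFDerivWithin ℝ 2 φ Ω x ![EuclideanSpace.single i 1, EuclideanSpace.single j 1]

/-- `u` is a viscosity subsolution of `M_a(D²u) = f` in `Ω`. -/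
def IsViscSubsol {n : ℕ} (a : Fin n → ℝ) (Ω : Set (En n)) (f u : En n → ℝ) : Prop :=
  ∀ x₀ ∈ Ω, ∀ φ : En n → ℝ, ContDiff ℝ 2 φ →
    IsLocalMaxOn (fun x => u x - φ x) Ω x₀ → f x₀ ≤ Ma a (hess φ x₀)

/-- `u` is a viscosity supersolution of `M_a(D²u) = f` in `Ω`. -/
def IsViscSupersol {n : ℕ} (a : Fin n → ℝ) (Ω : Set (En n)) (f u : En n → ℝ) : Prop :=
  ∀ x₀ ∈ Ω, ∀ φ : En n → ℝ, ContDiff ℝ 2 φ →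
    IsLocalMinOn (fun x => u x - φ x) Ω x₀ → Ma a (hess φ x₀) ≤ f x₀

/-- `u` is a (continuous) viscosity solution of `M_a(D²u) = f` in `Ω`. -/
def IsViscSolution {n : ℕ} (a : Fin n → ℝ) (Ω : Set (En n)) (f u : En n → ℝ) : Prop :=
  ContinuousOn u Ω ∧ IsViscSubsol a Ω f u ∧ IsViscSupersol a Ω f u

/-- The `L^p` norm of `f` on `D`. -/
noncomputable def lpNormOn {n : ℕ} (p : ℝ) (D : Set (En n)) (f : En n → ℝ) : ℝ :=
  (∫ x in D, |f x| ^ p) ^ (1 / p)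

/-- The sup norm of `f` on `D`. -/
noncomputable def supAbsOn {n : ℕ} (D : Set (En n)) (f : En n → ℝ) : ℝ :=
  sSup ((fun x => |f x|) '' D)

/-- The Hölder seminorm `[h]_{β,D}`. -/
noncomputable def holderSemi {n : ℕ} (β : ℝ) (D : Set (En n)) (h : En n → ℝ) : ℝ :=
  sSup {r | ∃ x ∈ D, ∃ y ∈ D, x ≠ y ∧ r = |h x - h y| / ‖x - y‖ ^ β}

/-- The Hölder norm `‖g‖_{C^β(D)} = sup_D |g| + [g]_{β,D}`. -/
noncomputable def cBetaNorm {n : ℕ} (β : ℝ) (D : Set (En n)) (g : En n → ℝ) : ℝ :=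
  supAbsOn D g + holderSemi β D g

/-- `g` is `β`-Hölder continuous on `D`. -/
def HolderOn {n : ℕ} (β : ℝ) (D : Set (En n)) (g : En n → ℝ) : Prop :=
  ∃ K : ℝ, ∀ x ∈ D, ∀ y ∈ D, |g x - g y| ≤ K * ‖x - y‖ ^ β

/-- The `C^{1,β}(D)` norm: `sup|g| + sup|Dg| + [Dg]_{β,D}`. -/
noncomputable def c1BetaNorm {n : ℕ} (β : ℝ) (D : Set (En n)) (g : En n → ℝ) : ℝ :=
  supAbsOn D g + sSup ((fun x => ‖fderiv ℝ g x‖) '' D) +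
    sSup {r | ∃ x ∈ D, ∃ y ∈ D, x ≠ y ∧ r = ‖fderiv ℝ g x - fderiv ℝ g y‖ / ‖x - y‖ ^ β}

/-- `g ∈ C^{1,β}(D)`: differentiable with `β`-Hölder derivative on `D`. -/
def C1HolderOn {n : ℕ} (β : ℝ) (D : Set (En n)) (g : En n → ℝ) : Prop :=
  ContDiff ℝ 1 g ∧ ∃ K : ℝ, ∀ x ∈ D, ∀ y ∈ D,
    ‖fderiv ℝ g x - fderiv ℝ g y‖ ≤ K * ‖x - y‖ ^ β

/-- Uniform exterior sphere condition with radius `R`: every boundary point lies on the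
boundary of a closed ball of radius `R` containing `Ω̄`. -/
def ExtSphere {n : ℕ} (Ω : Set (En n)) (R : ℝ) : Prop :=
  ∀ y ∈ frontier Ω, ∃ z : En n, dist y z = R ∧ closure Ω ⊆ closedBall z R

/-- The cone `Σ_θ = {x : xₙ ≥ |x| cos θ}`. -/
def coneSet (n : ℕ) [NeZero n] (θ : ℝ) : Set (En n) := {x | ‖x‖ * Real.cos θ ≤ x (lastIdx n)}

/-- Uniform exterior cone condition. -/
def ExtCone {n : ℕ} [NeZero n] (Ω : Set (En n)) : Prop :=
  ∃ θ₀ ∈ Set.Ioo (0 : ℝ) Real.pi, ∃ r₀ > (0 : ℝ), ∀ y ∈ frontier Ω,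
    ∃ O : En n ≃ₗᵢ[ℝ] En n,
      closure Ω ∩ ball y r₀ ⊆ (fun x => y + O x) '' coneSet n θ₀

/-- Uniform Lipschitz boundary with Lipschitz constant `L`: near each boundary point, in
suitable rotated coordinates, `Ω` is the region above the graph of an `L`-Lipschitz
function. -/
def LipschitzBoundary {n : ℕ} [NeZero n] (Ω : Set (En n)) (L : ℝ) : Prop :=
  ∃ r₀ > (0 : ℝ), ∀ y ∈ frontier Ω, ∃ O : En n ≃ₗᵢ[ℝ] En n, ∃ ψ : En n → ℝ,
    LipschitzWith (Real.toNNReal L) ψ ∧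
    ∀ x ∈ ball (0 : En n) r₀,
      (y + O x ∈ Ω ↔ ψ (x - EuclideanSpace.single (lastIdx n) (x (lastIdx n))) < x (lastIdx n))

/-- The open cube of edge `ℓ` centered at the origin. -/
def cube (n : ℕ) (ℓ : ℝ) : Set (En n) := {x | ∀ i, |x i| < ℓ / 2}

/-- The upper concave envelope of `u` in `Ω`: the smallest concave function `≥ u` in `Ω`. -/
noncomputable def upperEnvelope {n : ℕ} (Ω : Set (En n)) (u : En n → ℝ) : En n → ℝ :=
  fun x => sInf {t | ∃ φ : En n → ℝ, ConcaveOn ℝ Ω φ ∧ (∀ z ∈ Ω, u z ≤ φ z) ∧ t = φ x}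

/-- The lower convex envelope of `u` in `Ω`: the largest convex function `≤ u` in `Ω`. -/
noncomputable def lowerEnvelope {n : ℕ} (Ω : Set (En n)) (u : En n → ℝ) : En n → ℝ :=
  fun x => sSup {t | ∃ φ : En n → ℝ, ConvexOn ℝ Ω φ ∧ (∀ z ∈ Ω, φ z ≤ u z) ∧ t = φ x}

end

/-!
Uniqueness rests on the comparison principle. The sup-convolution of an upper semicontinuous
function is semiconvex, so by Alexandrov's theorem it is twice differentiable almost everywhere. If
`u` is a subsolution, `-v` a supersolution and `u + v` has a positive interior maximum, then
Jensen's lemma produces nearby points where both sup-convolutions have second-order expansions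
whose Hessians sum to a nearly nonpositive matrix. By monotonicity of `M_a` this contradicts the
equations once `u` has been made a strict subsolution by adding a small multiple of `‖x‖ ^ 2`.

Existence is Perron's method. As `a 1` and `a n` are positive, `M_a` has a definite sign on a
matrix with one dominant eigenvalue, so Gaussians centred at points outside `Ω`, which the cone
condition supplies on every scale, yield barriers. Comparison with barriers and with perturbed test
functions shows that the upper envelope `W` of all subsolutions below `g` is a subsolution, while
pasting strict subsolutions into the maximal `W` shows that its lower envelope is a supersolution;
both have boundary values `g`, so comparison forces them to agree.
-/

section Eigenvalues

variable {n : ℕ} {X Y : Matrix (Fin n) (Fin n) ℝ} {a : Fin n → ℝ}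

/-- The quadratic form `v ↦ ⟪v, X v⟫` of a matrix, through which symmetric matrices are ordered. -/
noncomputable def quadForm (X : Matrix (Fin n) (Fin n) ℝ) (v : En n) : ℝ :=
  inner ℝ v (Matrix.toEuclideanLin X v)

theorem quadForm_eq_sum (X : Matrix (Fin n) (Fin n) ℝ) (v : En n) :
    quadForm X v = ∑ i, ∑ j, v i * v j * X i j := by
  simp only [quadForm, PiLp.inner_apply, Matrix.toLpLin_apply, Matrix.mulVec, dotProduct,
    RCLike.inner_apply, conj_trivial, Finset.sum_mul]
  exact Finset.sum_congr rfl fun i _ => Finset.sum_congr rfl fun j _ => by ring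

theorem quadForm_zero (v : En n) : quadForm 0 v = 0 := by
  simp only [quadForm, map_zero, LinearMap.zero_apply, inner_zero_right]

theorem sortedEig_mono (X : Matrix (Fin n) (Fin n) ℝ) : Monotone (sortedEig X) := by
  unfold sortedEig
  split_ifs with hX
  · exact Tuple.monotone_sort hX.eigenvalues
  · exact monotone_const

/-- An orthonormal basis of eigenvectors of a symmetric matrix, listed in the order of
`sortedEig`. -/
noncomputable def sortedEigenbasis (hX : X.IsHermitian) : OrthonormalBasis (Fin n) ℝ (En n) :=
  hX.eigenvectorBasis.reindex (Tuple.sort hX.eigenvalues).symm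

theorem toEuclideanLin_sortedEigenbasis (hX : X.IsHermitian) (i : Fin n) :
    Matrix.toEuclideanLin X (sortedEigenbasis hX i) = sortedEig X i • sortedEigenbasis hX i := by
  rw [sortedEigenbasis, OrthonormalBasis.reindex_apply, Equiv.symm_symm, Matrix.toLpLin_apply,
    hX.mulVec_eigenvectorBasis, sortedEig, dif_pos hX]
  rfl

theorem quadForm_eq_sum_sortedEig (hX : X.IsHermitian) (v : En n) :
    quadForm X v = ∑ i, sortedEig X i * inner ℝ (sortedEigenbasis hX i) v ^ 2 := by
  have hsymm := Matrix.isSymmetric_toEuclideanLin_iff.mpr hX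
  rw [quadForm, ← (sortedEigenbasis hX).sum_inner_mul_inner]
  refine Finset.sum_congr rfl fun i _ => ?_
  rw [← hsymm, toEuclideanLin_sortedEigenbasis, inner_smul_left, real_inner_comm, conj_trivial]
  ring

theorem mul_norm_sq_eq_sum_inner (b : OrthonormalBasis (Fin n) ℝ (En n)) (c : ℝ) (v : En n) :
    c * ‖v‖ ^ 2 = ∑ i, c * inner ℝ (b i) v ^ 2 := by
  rw [← Finset.mul_sum, ← b.sum_sq_norm_inner_right v]
  simp only [Real.norm_eq_abs, sq_abs]

theorem sortedEig_mul_norm_sq_le (hX : X.IsHermitian) (i : Fin n) {v : En n}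
    (hv : ∀ j < i, inner ℝ (sortedEigenbasis hX j) v = 0) :
    sortedEig X i * ‖v‖ ^ 2 ≤ quadForm X v := by
  rw [quadForm_eq_sum_sortedEig hX, mul_norm_sq_eq_sum_inner (sortedEigenbasis hX)]
  refine Finset.sum_le_sum fun j _ => ?_
  rcases lt_or_ge j i with hj | hj
  · simp only [hv j hj, ne_eq, OfNat.ofNat_ne_zero, not_false_eq_true, zero_pow, mul_zero, le_refl]
  · exact mul_le_mul_of_nonneg_right (sortedEig_mono X hj) (sq_nonneg _)

theorem quadForm_le_sortedEig_mul_norm_sq (hX : X.IsHermitian) (i : Fin n) {v : En n}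
    (hv : ∀ j, i < j → inner ℝ (sortedEigenbasis hX j) v = 0) :
    quadForm X v ≤ sortedEig X i * ‖v‖ ^ 2 := by
  rw [quadForm_eq_sum_sortedEig hX, mul_norm_sq_eq_sum_inner (sortedEigenbasis hX)]
  refine Finset.sum_le_sum fun j _ => ?_
  rcases lt_or_ge i j with hj | hj
  · simp only [hv j hj, ne_eq, OfNat.ofNat_ne_zero, not_false_eq_true, zero_pow, mul_zero, le_refl]
  · exact mul_le_mul_of_nonneg_right (sortedEig_mono X hj) (sq_nonneg _)

theorem exists_ne_zero_inner_eq_zero_of_ne (i : Fin n) (b : Fin n → En n) :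
    ∃ v ≠ 0, ∀ j ≠ i, inner ℝ (b j) v = 0 := by
  let T : En n →ₗ[ℝ] {j // j ≠ i} → ℝ := LinearMap.pi fun j => (innerSL ℝ (b j)).toLinearMap
  have hker : LinearMap.ker T ≠ ⊥ := by
    apply LinearMap.ker_ne_bot_of_finrank_lt
    have := i.pos
    simp only [Module.finrank_fintype_fun_eq_card, Fintype.card_subtype_compl, Fintype.card_fin,
      Fintype.card_subtype_eq, finrank_euclideanSpace]
    omega
  obtain ⟨v, hv, hv0⟩ := (Submodule.ne_bot_iff _).1 hker
  exact ⟨v, hv0, fun j hj => congrFun (LinearMap.mem_ker.1 hv) ⟨j, hj⟩⟩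

/- The `n - 1` conditions `v ⟂ eⱼ(X)` for `j < i` and `v ⟂ eⱼ(Y)` for `j > i` have a common nonzero
solution `v`, which separates the `i`-th eigenvalues. -/
theorem sortedEig_le_add (hX : X.IsHermitian) (hY : Y.IsHermitian) {c : ℝ}
    (h : ∀ v, quadForm X v ≤ quadForm Y v + c * ‖v‖ ^ 2) (i : Fin n) :
    sortedEig X i ≤ sortedEig Y i + c := by
  obtain ⟨v, hv0, hv⟩ := exists_ne_zero_inner_eq_zero_of_ne i fun j =>
    if j < i then sortedEigenbasis hX j else sortedEigenbasis hY j
  have hXv : sortedEig X i * ‖v‖ ^ 2 ≤ quadForm X v := sortedEig_mul_norm_sq_le hX i fun j hj => by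
    simpa only [if_pos hj] using hv j hj.ne
  have hYv : quadForm Y v ≤ sortedEig Y i * ‖v‖ ^ 2 :=
    quadForm_le_sortedEig_mul_norm_sq hY i fun j hj => by
      simpa only [if_neg hj.le.not_gt] using hv j hj.ne'
  have hpos : 0 < ‖v‖ ^ 2 := by positivity
  refine le_of_mul_le_mul_right ?_ hpos
  linarith [h v]

theorem Ma_le_add (ha : ∀ i, 0 ≤ a i) (hX : X.IsHermitian) (hY : Y.IsHermitian) {c : ℝ}
    (h : ∀ v, quadForm X v ≤ quadForm Y v + c * ‖v‖ ^ 2) :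
    Ma a X ≤ Ma a Y + c * ∑ i, a i := by
  simp only [Ma, Finset.mul_sum, ← Finset.sum_add_distrib]
  refine Finset.sum_le_sum fun i _ => ?_
  linarith [mul_le_mul_of_nonneg_left (sortedEig_le_add hX hY h i) (ha i)]

theorem Ma_mono (ha : ∀ i, 0 ≤ a i) (hX : X.IsHermitian) (hY : Y.IsHermitian)
    (h : ∀ v, quadForm X v ≤ quadForm Y v) : Ma a X ≤ Ma a Y := by
  simpa only [zero_mul, add_zero] using
    Ma_le_add (c := 0) ha hX hY fun v => by simpa only [zero_mul, add_zero] using h v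

theorem Ma_eq_add (ha : ∀ i, 0 ≤ a i) (hX : X.IsHermitian) (hY : Y.IsHermitian) {c : ℝ}
    (h : ∀ v, quadForm X v = quadForm Y v + c * ‖v‖ ^ 2) :
    Ma a X = Ma a Y + c * ∑ i, a i := by
  have hXY := Ma_le_add ha hX hY fun v => (h v).le
  have hYX := Ma_le_add (c := -c) ha hY hX fun v => by linarith [h v]
  linarith

theorem Ma_zero (a : Fin n → ℝ) : Ma a 0 = 0 := by
  have hX : (0 : Matrix (Fin n) (Fin n) ℝ).IsHermitian := Matrix.isHermitian_zero
  simp only [Ma, sortedEig, dif_pos hX, hX.eigenvalues_eq_zero_iff.2 rfl, Pi.zero_apply, mul_zero,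
    Finset.sum_const_zero]

theorem sortedEig_le_of_quadForm_le (hX : X.IsHermitian) {c : ℝ}
    (h : ∀ v, quadForm X v ≤ c * ‖v‖ ^ 2) (i : Fin n) : sortedEig X i ≤ c := by
  have := h (sortedEigenbasis hX i)
  rwa [quadForm, toEuclideanLin_sortedEigenbasis, inner_smul_right, real_inner_self_eq_norm_sq,
    (sortedEigenbasis hX).norm_eq_one, one_pow, mul_one, mul_one] at this

theorem le_sortedEig_of_le_quadForm (hX : X.IsHermitian) {c : ℝ}
    (h : ∀ v, c * ‖v‖ ^ 2 ≤ quadForm X v) (i : Fin n) : c ≤ sortedEig X i := by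
  have := h (sortedEigenbasis hX i)
  rwa [quadForm, toEuclideanLin_sortedEigenbasis, inner_smul_right, real_inner_self_eq_norm_sq,
    (sortedEigenbasis hX).norm_eq_one, one_pow, mul_one, mul_one] at this

theorem sum_mul_const_sub_sortedEig (a : Fin n → ℝ) (c : ℝ) (X : Matrix (Fin n) (Fin n) ℝ) :
    ∑ i, a i * (c - sortedEig X i) = c * ∑ i, a i - Ma a X := by
  simp only [mul_sub, Finset.sum_sub_distrib, ← Finset.sum_mul, mul_comm c, Ma]

theorem Ma_le_of_quadForm_le [NeZero n] (ha : ∀ i, 0 ≤ a i) (hX : X.IsHermitian) {c d : ℝ}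
    (hc : ∀ v, quadForm X v ≤ c * ‖v‖ ^ 2) {e : En n} (he : e ≠ 0)
    (hd : quadForm X e ≤ d * ‖e‖ ^ 2) : Ma a X ≤ c * ∑ i, a i - (c - d) * a 0 := by
  have hpos : 0 < ‖e‖ ^ 2 := by positivity
  have hmin : sortedEig X 0 ≤ d := le_of_mul_le_mul_right
    ((sortedEig_mul_norm_sq_le hX 0 fun j hj => absurd hj (Fin.not_lt_zero j)).trans hd) hpos
  have hsum : a 0 * (c - sortedEig X 0) ≤ ∑ i, a i * (c - sortedEig X i) :=
    Finset.single_le_sum (f := fun i => a i * (c - sortedEig X i))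
      (fun i _ => mul_nonneg (ha i) (sub_nonneg.2 (sortedEig_le_of_quadForm_le hX hc i)))
      (Finset.mem_univ 0)
  rw [sum_mul_const_sub_sortedEig] at hsum
  linarith [mul_le_mul_of_nonneg_left hmin (ha 0)]

theorem le_lastIdx [NeZero n] (i : Fin n) : i ≤ lastIdx n := by
  have := i.2
  simp only [lastIdx, Fin.le_def]
  omega

theorem le_Ma_of_le_quadForm [NeZero n] (ha : ∀ i, 0 ≤ a i) (hX : X.IsHermitian) {c d : ℝ}
    (hc : ∀ v, c * ‖v‖ ^ 2 ≤ quadForm X v) {e : En n} (he : e ≠ 0)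
    (hd : d * ‖e‖ ^ 2 ≤ quadForm X e) :
    c * ∑ i, a i + (d - c) * a (lastIdx n) ≤ Ma a X := by
  have hpos : 0 < ‖e‖ ^ 2 := by positivity
  have hmax : d ≤ sortedEig X (lastIdx n) := le_of_mul_le_mul_right
    (hd.trans (quadForm_le_sortedEig_mul_norm_sq hX _ fun j hj =>
      absurd hj (le_lastIdx j).not_gt)) hpos
  have hsum : -(a (lastIdx n) * (c - sortedEig X (lastIdx n))) ≤
      ∑ i, -(a i * (c - sortedEig X i)) :=
    Finset.single_le_sum (f := fun i => -(a i * (c - sortedEig X i)))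
      (fun i _ => neg_nonneg.2 (mul_nonpos_of_nonneg_of_nonpos (ha i)
        (sub_nonpos.2 (le_sortedEig_of_le_quadForm hX hc i)))) (Finset.mem_univ (lastIdx n))
  rw [Finset.sum_neg_distrib, sum_mul_const_sub_sortedEig] at hsum
  linarith [mul_le_mul_of_nonneg_left hmax (ha (lastIdx n))]

end Eigenvalues

section Hessian

variable {n : ℕ} {a : Fin n → ℝ} {φ ψ : En n → ℝ} {x : En n}

theorem quadForm_hess (φ : En n → ℝ) (x v : En n) :
    quadForm (hess φ x) v = fderiv ℝ (fderiv ℝ φ) x v v := by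
  have hv : v = ∑ i, v i • EuclideanSpace.single i (1 : ℝ) := by
    simpa only [EuclideanSpace.basisFun_apply, EuclideanSpace.basisFun_repr] using
      ((EuclideanSpace.basisFun (Fin n) ℝ).sum_repr v).symm
  conv_rhs => rw [hv]
  simp only [map_sum, map_smul, _root_.sum_apply, _root_.smul_apply, smul_eq_mul, quadForm_eq_sum,
    hess, iteratedFDeriv_two_apply, Matrix.cons_val_zero, Matrix.cons_val_one, Finset.mul_sum]
  rw [Finset.sum_comm]
  exact Finset.sum_congr rfl fun i _ => Finset.sum_congr rfl fun j _ => by ring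

theorem isHermitian_hess (hφ : ContDiff ℝ 2 φ) (x : En n) : (hess φ x).IsHermitian := by
  have hsymm := (hφ.contDiffAt (x := x)).isSymmSndFDerivAt (by simp)
  refine Matrix.IsHermitian.ext fun i j => ?_
  simp only [hess, iteratedFDeriv_two_apply, star_trivial]
  exact hsymm _ _

theorem quadForm_hess_neg (φ : En n → ℝ) (x v : En n) :
    quadForm (hess (fun z => -φ z) x) v = -quadForm (hess φ x) v := by
  have hneg : fderiv ℝ (fun z => -φ z) = fun z => -fderiv ℝ φ z := funext fun z => fderiv_fun_neg
  rw [quadForm_hess, quadForm_hess, hneg, fderiv_fun_neg, _root_.neg_apply, _root_.neg_apply]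

theorem hess_add_const (φ : En n → ℝ) (c : ℝ) : hess (fun z => φ z + c) = hess φ := by
  have : fderiv ℝ (fun z => φ z + c) = fderiv ℝ φ := funext fun z => fderiv_add_const c
  funext x i j
  simp only [hess, iteratedFDeriv_two_apply, this]

theorem hasDerivAt_add_smul (x v : En n) (t : ℝ) :
    HasDerivAt (fun t : ℝ => x + t • v) v t := by
  simpa using ((hasDerivAt_id t).smul_const v).const_add x

theorem hasDerivAt_comp_line (hφ : ContDiff ℝ 2 φ) (x v : En n) (t : ℝ) :
    HasDerivAt (fun t : ℝ => φ (x + t • v)) (fderiv ℝ φ (x + t • v) v) t :=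
  (hφ.differentiable two_ne_zero _).hasFDerivAt.comp_hasDerivAt t (hasDerivAt_add_smul x v t)

theorem hasDerivAt_fderiv_line (hφ : ContDiff ℝ 2 φ) (x v : En n) :
    HasDerivAt (fun t : ℝ => fderiv ℝ φ (x + t • v) v) (quadForm (hess φ x) v) 0 := by
  have hfd : Differentiable ℝ (fderiv ℝ φ) :=
    (hφ.fderiv_right (m := 1) (by norm_num)).differentiable one_ne_zero
  have hx : HasFDerivAt (fderiv ℝ φ) (fderiv ℝ (fderiv ℝ φ) x) (x + (0 : ℝ) • v) := by
    simpa using (hfd x).hasFDerivAt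
  have hline := hx.comp_hasDerivAt (0 : ℝ) (hasDerivAt_add_smul x v 0)
  rw [quadForm_hess]
  simpa using hline.clm_apply (hasDerivAt_const (0 : ℝ) v)

theorem quadForm_hess_eq_of_hasDerivAt (hφ : ContDiff ℝ 2 φ) {v : En n} {l : ℝ → ℝ} {c : ℝ}
    (hl : ∀ t : ℝ, HasDerivAt (fun t : ℝ => φ (x + t • v)) (l t) t) (hc : HasDerivAt l c 0) :
    quadForm (hess φ x) v = c := by
  have hl' : l = fun t : ℝ => fderiv ℝ φ (x + t • v) v :=
    funext fun t => (hl t).unique (hasDerivAt_comp_line hφ x v t)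
  exact (hasDerivAt_fderiv_line hφ x v).unique (hl' ▸ hc)

theorem quadForm_hess_add (hφ : ContDiff ℝ 2 φ) (hψ : ContDiff ℝ 2 ψ) (x v : En n) :
    quadForm (hess (fun z => φ z + ψ z) x) v = quadForm (hess φ x) v + quadForm (hess ψ x) v :=
  quadForm_hess_eq_of_hasDerivAt (hφ.add hψ)
    (fun t => (hasDerivAt_comp_line hφ x v t).add (hasDerivAt_comp_line hψ x v t))
    ((hasDerivAt_fderiv_line hφ x v).add (hasDerivAt_fderiv_line hψ x v))

theorem quadForm_hess_nonpos_of_isLocalMax (hφ : ContDiff ℝ 2 φ) (hx : IsLocalMax φ x)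
    (v : En n) : quadForm (hess φ x) v ≤ 0 := by
  by_contra! hpos
  let l : ℝ → ℝ := fun t => φ (x + t • v)
  have hmax : IsLocalMax l 0 := by
    have hline : Tendsto (fun t : ℝ => x + t • v) (nhds 0) (nhds x) := by
      simpa using (hasDerivAt_add_smul x v 0).continuousAt.tendsto
    filter_upwards [hline.eventually hx] with t ht
    simpa [l] using ht
  have hderiv : deriv l = fun t => fderiv ℝ φ (x + t • v) v :=
    funext fun t => (hasDerivAt_comp_line hφ x v t).deriv
  have hderiv₂ : deriv (deriv l) 0 = quadForm (hess φ x) v := by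
    rw [hderiv, (hasDerivAt_fderiv_line hφ x v).deriv]
  have hmin : IsLocalMin l 0 := isLocalMin_of_deriv_deriv_pos (hderiv₂ ▸ hpos)
    hmax.deriv_eq_zero (hasDerivAt_comp_line hφ x v 0).continuousAt
  have hconst : l =ᶠ[nhds 0] fun _ => l 0 := by
    filter_upwards [hmax, hmin] with t hle hge using le_antisymm hle hge
  rw [← hderiv₂, hconst.deriv.deriv_eq] at hpos
  simp at hpos

theorem Ma_hess_le_of_isLocalMax_sub (ha : ∀ i, 0 ≤ a i) (hφ : ContDiff ℝ 2 φ)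
    (hψ : ContDiff ℝ 2 ψ) (hx : IsLocalMax (fun z => φ z - ψ z) x) :
    Ma a (hess φ x) ≤ Ma a (hess ψ x) := by
  refine Ma_mono ha (isHermitian_hess hφ x) (isHermitian_hess hψ x) fun v => ?_
  have hadd := quadForm_hess_add hφ hψ.neg x v
  rw [quadForm_hess_neg] at hadd
  have hsub := quadForm_hess_nonpos_of_isLocalMax (hφ.sub hψ) hx v
  simp only [sub_eq_add_neg] at hsub
  linarith

theorem Ma_hess_le_add_norm_sub (ha : ∀ i, 0 ≤ a i) (hφ : ContDiff ℝ 2 φ) (x y : En n) :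
    Ma a (hess φ x) ≤
      Ma a (hess φ y) + ‖iteratedFDeriv ℝ 2 φ x - iteratedFDeriv ℝ 2 φ y‖ * ∑ i, a i := by
  refine Ma_le_add ha (isHermitian_hess hφ x) (isHermitian_hess hφ y) fun v => ?_
  have hform : ∀ z, quadForm (hess φ z) v = iteratedFDeriv ℝ 2 φ z ![v, v] := fun z => by
    simp [quadForm_hess, iteratedFDeriv_two_apply]
  have hle := (le_abs_self _).trans
    ((iteratedFDeriv ℝ 2 φ x - iteratedFDeriv ℝ 2 φ y).le_opNorm ![v, v])
  simp only [_root_.sub_apply, Fin.prod_univ_two, Matrix.cons_val_zero,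
    Matrix.cons_val_one, ← pow_two] at hle
  linarith [hform x, hform y]

theorem continuous_Ma_hess (ha : ∀ i, 0 ≤ a i) (hφ : ContDiff ℝ 2 φ) :
    Continuous fun x => Ma a (hess φ x) := by
  have hD : Continuous (iteratedFDeriv ℝ 2 φ) := hφ.continuous_iteratedFDeriv (by norm_num)
  refine continuous_iff_continuousAt.2 fun x => tendsto_iff_dist_tendsto_zero.2 ?_
  have hlim : Tendsto (fun y => ‖iteratedFDeriv ℝ 2 φ y - iteratedFDeriv ℝ 2 φ x‖ * ∑ i, a i)
      (nhds x) (nhds 0) := by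
    have hcont : Continuous fun y =>
        ‖iteratedFDeriv ℝ 2 φ y - iteratedFDeriv ℝ 2 φ x‖ * ∑ i, a i :=
      (hD.sub continuous_const).norm.mul continuous_const
    simpa using hcont.tendsto x
  refine squeeze_zero (fun _ => dist_nonneg) (fun y => ?_) hlim
  have hxy := Ma_hess_le_add_norm_sub ha hφ x y
  rw [norm_sub_rev] at hxy
  exact abs_sub_le_iff.2
    ⟨by linarith [Ma_hess_le_add_norm_sub ha hφ y x], by linarith⟩

theorem hasDerivAt_norm_sq_line (x x₀ v : En n) (t : ℝ) :
    HasDerivAt (fun t : ℝ => ‖x + t • v - x₀‖ ^ 2) (2 * inner ℝ (x + t • v - x₀) v) t :=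
  ((hasDerivAt_add_smul x v t).sub_const x₀).norm_sq

theorem contDiff_radial {h : ℝ → ℝ} (hh : ContDiff ℝ 2 h) (x₀ : En n) :
    ContDiff ℝ 2 fun z => h (‖z - x₀‖ ^ 2) :=
  hh.comp ((contDiff_id.sub contDiff_const).norm_sq ℝ)

theorem quadForm_hess_radial {h h' : ℝ → ℝ} {h'' : ℝ} {x₀ : En n} (hh : ContDiff ℝ 2 h)
    (hh' : ∀ s, HasDerivAt h (h' s) s) (hh'' : HasDerivAt h' h'' (‖x - x₀‖ ^ 2)) (v : En n) :
    quadForm (hess (fun z => h (‖z - x₀‖ ^ 2)) x) v =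
      4 * h'' * inner ℝ (x - x₀) v ^ 2 + 2 * h' (‖x - x₀‖ ^ 2) * ‖v‖ ^ 2 := by
  refine quadForm_hess_eq_of_hasDerivAt (contDiff_radial hh x₀)
    (fun t => (hh' _).comp t (hasDerivAt_norm_sq_line x x₀ v t)) ?_
  have hv : HasDerivAt (fun t : ℝ => 2 * inner ℝ (x + t • v - x₀) v) (2 * inner ℝ v v) 0 := by
    simpa using (((hasDerivAt_add_smul x v 0).sub_const x₀).inner ℝ
      (hasDerivAt_const 0 v)).const_mul 2
  have hs : HasDerivAt (fun t : ℝ => h' (‖x + t • v - x₀‖ ^ 2))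
      (h'' * (2 * inner ℝ (x - x₀) v)) 0 := by
    have hx := hasDerivAt_norm_sq_line x x₀ v 0
    simp only [zero_smul, add_zero] at hx
    exact HasDerivAt.comp (0 : ℝ) (by simpa using hh'') hx
  refine (hs.mul hv).congr_deriv ?_
  simp only [zero_smul, add_zero, real_inner_self_eq_norm_sq]
  ring

/-- The paraboloid `c + k ‖z - x₀‖²`, whose Hessian is the constant matrix `2k`. -/
noncomputable def paraboloid (c k : ℝ) (x₀ z : En n) : ℝ := c + k * ‖z - x₀‖ ^ 2

theorem contDiff_paraboloid (c k : ℝ) (x₀ : En n) : ContDiff ℝ 2 (paraboloid c k x₀) :=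
  contDiff_radial (h := fun s => c + k * s) (by fun_prop) x₀

theorem quadForm_hess_paraboloid (c k : ℝ) (x₀ x v : En n) :
    quadForm (hess (paraboloid c k x₀) x) v = 2 * k * ‖v‖ ^ 2 := by
  have := quadForm_hess_radial (x := x) (x₀ := x₀) (h := fun s => c + k * s) (h' := fun _ => k)
    (by fun_prop) (fun s => by simpa using ((hasDerivAt_id s).const_mul k).const_add c)
    (hasDerivAt_const _ k) v
  rw [mul_zero, zero_mul, zero_add] at this
  exact this

theorem Ma_hess_add_paraboloid (ha : ∀ i, 0 ≤ a i) (hφ : ContDiff ℝ 2 φ) (c k : ℝ) (x₀ : En n) :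
    Ma a (hess (fun z => φ z + paraboloid c k x₀ z) x) = Ma a (hess φ x) + 2 * k * ∑ i, a i :=
  Ma_eq_add ha (isHermitian_hess (hφ.add (contDiff_paraboloid c k x₀)) x) (isHermitian_hess hφ x)
    fun v => by rw [quadForm_hess_add hφ (contDiff_paraboloid c k x₀), quadForm_hess_paraboloid]

theorem Ma_hess_paraboloid (ha : ∀ i, 0 ≤ a i) (c k : ℝ) (x₀ x : En n) :
    Ma a (hess (paraboloid c k x₀) x) = 2 * k * ∑ i, a i := by
  rw [Ma_eq_add (Y := 0) ha (isHermitian_hess (contDiff_paraboloid c k x₀) x)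
    Matrix.isHermitian_zero fun v => by rw [quadForm_hess_paraboloid, quadForm_zero, zero_add],
    Ma_zero, zero_add]

/-- The quadratic polynomial with slope `p` and second derivative `B` at `x₀`, where it vanishes. -/
noncomputable def quadPoly {E : Type*} [NormedAddCommGroup E] [InnerProductSpace ℝ E] (p : E)
    (B : E →L[ℝ] E) (x₀ z : E) : ℝ :=
  inner ℝ p (z - x₀) + (1 / 2) * inner ℝ (B (z - x₀)) (z - x₀)

theorem contDiff_quadPoly (p : En n) (B : En n →L[ℝ] En n) (x₀ : En n) :
    ContDiff ℝ 2 (quadPoly p B x₀) := by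
  have hsub : ContDiff ℝ 2 fun z : En n => z - x₀ := contDiff_id.sub contDiff_const
  exact (contDiff_const.inner ℝ hsub).add
    (contDiff_const.mul ((B.contDiff.comp hsub).inner ℝ hsub))

theorem quadForm_hess_quadPoly (p : En n) (B : En n →L[ℝ] En n) (x₀ v : En n) :
    quadForm (hess (quadPoly p B x₀) x₀) v = inner ℝ (B v) v := by
  refine quadForm_hess_eq_of_hasDerivAt (contDiff_quadPoly p B x₀)
    (l := fun t => inner ℝ p v + t * inner ℝ (B v) v) (fun t => ?_) ?_
  · have hpoly : (fun t : ℝ => quadPoly p B x₀ (x₀ + t • v)) =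
        fun t => t * inner ℝ p v + t ^ 2 * (1 / 2 * inner ℝ (B v) v) := funext fun t => by
      simp only [quadPoly, add_sub_cancel_left, map_smul, inner_smul_left, inner_smul_right,
        conj_trivial]
      ring
    rw [hpoly]
    refine (((hasDerivAt_id t).mul_const _).add
      (((hasDerivAt_id t).pow 2).mul_const _)).congr_deriv ?_
    simp
    ring
  · simpa using ((hasDerivAt_id (0 : ℝ)).mul_const (inner ℝ (B v) v)).const_add (inner ℝ p v)

end Hessian

section Telescoping

variable {α : Type*} [PseudoMetricSpace α]

/- Cut `[0, 1]` into `N + 1` equal pieces: the quadratic terms add up to `b / (N + 1)`. -/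
theorem dist_le_of_dist_le_add_sq {φ : ℝ → α} {a b : ℝ}
    (h : ∀ s t, 0 ≤ s → s ≤ t → t ≤ 1 → dist (φ s) (φ t) ≤ a * (t - s) + b * (t - s) ^ 2) :
    dist (φ 0) (φ 1) ≤ a := by
  have hpartition : ∀ N : ℕ, dist (φ 0) (φ 1) ≤ a + b * (1 / (N + 1)) := fun N => by
    have hN : (0 : ℝ) < N + 1 := by positivity
    have hstep : ∀ {k : ℕ}, k < N + 1 → dist (φ (k / (N + 1))) (φ ((k + 1 : ℕ) / (N + 1))) ≤
        a * (1 / (N + 1)) + b * (1 / (N + 1)) ^ 2 := fun {k} hk => by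
      have hk' : ((k + 1 : ℕ) : ℝ) ≤ N + 1 := mod_cast hk
      have := h (k / (N + 1)) ((k + 1 : ℕ) / (N + 1)) (by positivity)
        (by gcongr; omega) ((div_le_one hN).2 hk')
      rwa [← sub_div, show ((k + 1 : ℕ) : ℝ) - k = 1 by push_cast; ring] at this
    have hsum := dist_le_range_sum_of_dist_le (f := fun k : ℕ => φ (k / (N + 1))) (N + 1) hstep
    simp only [CharP.cast_eq_zero, zero_div, Nat.cast_add, Nat.cast_one, div_self hN.ne',
      Finset.sum_const, Finset.card_range, nsmul_eq_mul] at hsum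
    refine hsum.trans_eq ?_
    field_simp
  have hlim : Tendsto (fun N : ℕ => a + b * (1 / ((N : ℝ) + 1))) atTop (nhds (a + b * 0)) :=
    (tendsto_one_div_add_atTop_nhds_zero_nat.const_mul b).const_add a
  simpa using ge_of_tendsto' hlim hpartition

end Telescoping

section Subgradient

variable {E : Type*} [NormedAddCommGroup E] [InnerProductSpace ℝ E]
  {G : E → ℝ} {q : E → E} {p p' x x' y y' j j' : E}

/-- `p` is a subgradient of `G` at `x`: the affine function with slope `p` through `(x, G x)` lies
below `G`. -/
def IsSubgradient (G : E → ℝ) (p x : E) : Prop := ∀ z, G x + inner ℝ p (z - x) ≤ G z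

theorem IsSubgradient.inner_sub_nonneg (h : IsSubgradient G p x) (h' : IsSubgradient G p' x') :
    0 ≤ inner ℝ (p - p') (x - x') := by
  have hx := h x'
  have hx' := h' x
  rw [← neg_sub x x', inner_neg_right] at hx
  rw [inner_sub_left]
  linarith

theorem convexOn_of_isSubgradient (hq : ∀ x, IsSubgradient G (q x) x) : ConvexOn ℝ univ G := by
  refine ⟨convex_univ, fun x _ z _ s t hs ht hst => ?_⟩
  have hx := mul_le_mul_of_nonneg_left (hq (s • x + t • z) x) hs
  have hz := mul_le_mul_of_nonneg_left (hq (s • x + t • z) z) ht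
  have hcancel : s * inner ℝ (q (s • x + t • z)) (x - (s • x + t • z)) +
      t * inner ℝ (q (s • x + t • z)) (z - (s • x + t • z)) = 0 := by
    rw [← inner_smul_right, ← inner_smul_right, ← inner_add_right,
      show s • (x - (s • x + t • z)) + t • (z - (s • x + t • z)) =
        (1 - (s + t)) • (s • x + t • z) by module, hst, sub_self, zero_smul, inner_zero_right]
  simp only [smul_eq_mul]
  linear_combination hx + hz - hcancel - G (s • x + t • z) * hst

theorem IsSubgradient.add {H : E → ℝ} (h : IsSubgradient G p x) (h' : IsSubgradient H p' x) :
    IsSubgradient (fun z => G z + H z) (p + p') x := fun z => by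
  rw [inner_add_left]
  linarith [h z, h' z]

theorem norm_sq_sub_le_inner_of_isSubgradient (h : IsSubgradient G (y - j) j)
    (h' : IsSubgradient G (y' - j') j') : ‖j - j'‖ ^ 2 ≤ inner ℝ (y - y') (j - j') := by
  have hmono := h.inner_sub_nonneg h'
  rw [show y - j - (y' - j') = y - y' - (j - j') by abel, inner_sub_left,
    real_inner_self_eq_norm_sq] at hmono
  linarith

theorem norm_sub_le_of_isSubgradient (h : IsSubgradient G (y - j) j)
    (h' : IsSubgradient G (y' - j') j') : ‖j - j'‖ ≤ ‖y - y'‖ := by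
  have hle := (norm_sq_sub_le_inner_of_isSubgradient h h').trans (real_inner_le_norm _ _)
  nlinarith [norm_nonneg (j - j'), norm_nonneg (y - y')]

theorem IsSubgradient.norm_le {K : NNReal} {s : Set E} (h : IsSubgradient G p x)
    (hG : LipschitzOnWith K G s) (hs : s ∈ nhds x) : ‖p‖ ≤ K := by
  have hline : Tendsto (fun t : ℝ => x + t • p) (nhds 0) (nhds x) := by
    have : Continuous fun t : ℝ => x + t • p := by fun_prop
    simpa using this.tendsto 0
  obtain ⟨t, hts, ht : 0 < t⟩ := (((hline.eventually hs).filter_mono nhdsWithin_le_nhds).and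
    (self_mem_nhdsWithin (s := Ioi (0 : ℝ)))).exists
  have hlower := h (x + t • p)
  have hupper := (le_abs_self _).trans (hG.dist_le_mul _ hts _ (mem_of_mem_nhds hs))
  rw [dist_self_add_left, norm_smul, Real.norm_of_nonneg ht.le] at hupper
  rw [add_sub_cancel_left, inner_smul_right, real_inner_self_eq_norm_sq] at hlower
  by_contra! hcon
  have hp : 0 < ‖p‖ := K.2.trans_lt hcon
  nlinarith [mul_pos ht hp]

theorem isSubgradient_of_forall_le_add_norm_sq (hG : ConvexOn ℝ univ G)
    (hj : ∀ z, G j + 1 / 2 * ‖j - y‖ ^ 2 ≤ G z + 1 / 2 * ‖z - y‖ ^ 2) :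
    IsSubgradient G (y - j) j := by
  intro z
  have hsegment : ∀ t ∈ Ioo (0 : ℝ) 1,
      G j + inner ℝ (y - j) (z - j) ≤ G z + t * (1 / 2 * ‖z - j‖ ^ 2) := fun t ⟨ht0, ht1⟩ => by
    have hmin := hj (j + t • (z - j))
    have hconv := hG.2 (mem_univ j) (mem_univ z) (sub_nonneg.2 ht1.le) ht0.le (sub_add_cancel 1 t)
    have hnorm : ‖j + t • (z - j) - y‖ ^ 2 =
        ‖j - y‖ ^ 2 - 2 * t * inner ℝ (y - j) (z - j) + t ^ 2 * ‖z - j‖ ^ 2 := by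
      rw [show j + t • (z - j) - y = t • (z - j) - (y - j) by abel, norm_sub_sq_real,
        norm_smul, inner_smul_left, mul_pow, real_inner_comm, norm_sub_rev j y,
        Real.norm_eq_abs, sq_abs, conj_trivial]
      ring
    rw [show (1 - t) • j + t • z = j + t • (z - j) by module, smul_eq_mul, smul_eq_mul] at hconv
    refine le_of_mul_le_mul_left ?_ ht0
    nlinarith
  have hlim : Tendsto (fun t : ℝ => G z + t * (1 / 2 * ‖z - j‖ ^ 2)) (nhdsWithin 0 (Ioi 0))
      (nhds (G z + 0 * (1 / 2 * ‖z - j‖ ^ 2))) :=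
    Continuous.continuousWithinAt (by fun_prop)
  rw [zero_mul, add_zero] at hlim
  refine ge_of_tendsto hlim ?_
  filter_upwards [Ioo_mem_nhdsGT one_pos] with t ht using hsegment t ht

end Subgradient

section Growth

variable {E : Type*} [NormedAddCommGroup E] [InnerProductSpace ℝ E] [FiniteDimensional ℝ E]

theorem exists_forall_le_of_quadratic_le {F : E → ℝ} (hF : Continuous F) {A b k : ℝ} (hk : 0 < k)
    (x₀ : E) (hgrowth : ∀ z, A - b * ‖z - x₀‖ + k * ‖z - x₀‖ ^ 2 ≤ F z) :
    ∃ j, ∀ z, F j ≤ F z := by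
  have hnorm : Tendsto (fun z => ‖z - x₀‖) (cocompact E) atTop := by
    refine tendsto_atTop_mono (fun z => norm_sub_norm_le z x₀) ?_
    exact tendsto_atTop_add_const_right _ (-‖x₀‖) tendsto_norm_cocompact_atTop
  refine hF.exists_forall_le (tendsto_atTop_mono (fun z => ?_) (tendsto_atTop_add_const_left _ A
    (hnorm.atTop_mul_atTop₀ (tendsto_atTop_add_const_right _ (-b) (hnorm.const_mul_atTop hk)))))
  linarith [hgrowth z]

end Growth

section SecondOrder

variable {E : Type*} [NormedAddCommGroup E] [InnerProductSpace ℝ E]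
  {F F₁ F₂ G : E → ℝ} {q : E → E} {p p₁ p₂ x : E} {B B₁ B₂ : E →L[ℝ] E}

/-- `F` has the second-order Taylor expansion at `x` with gradient `p` and second derivative `B`, in
the pointwise (Peano) sense. -/
def HasPeanoExpansionAt (F : E → ℝ) (p : E) (B : E →L[ℝ] E) (x : E) : Prop :=
  (fun h => F (x + h) - F x - inner ℝ p h - 1 / 2 * inner ℝ (B h) h) =o[nhds 0] fun h => ‖h‖ ^ 2

theorem abs_sub_le_of_slope_bounds {φ l : ℝ → ℝ} {d ε : ℝ}
    (hl : ∀ s t, l s * (t - s) ≤ φ t - φ s) (hε : ∀ t ∈ Icc (0 : ℝ) 1, |l t - t * d| ≤ ε) :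
    |φ 1 - φ 0 - 1 / 2 * d| ≤ ε := by
  have htelescope := dist_le_of_dist_le_add_sq (φ := fun t => φ t - 1 / 2 * t ^ 2 * d) (a := ε)
    (b := 1 / 2 * |d|) fun s t hs hst ht => by
      have hts := sub_nonneg.2 hst
      have hls := mul_le_mul_of_nonneg_right (abs_le.1 (hε s ⟨hs, hst.trans ht⟩)).1 hts
      have hlt := mul_le_mul_of_nonneg_right (abs_le.1 (hε t ⟨hs.trans hst, ht⟩)).2 hts
      have hd := mul_le_mul_of_nonneg_right (le_abs_self d) (sq_nonneg (t - s))
      rw [dist_comm, Real.dist_eq, abs_le]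
      constructor
      · linear_combination hl s t + hls + 1 / 2 * hd
      · linear_combination hl t s + hlt + 1 / 2 * hd
  rw [dist_comm, Real.dist_eq] at htelescope
  convert htelescope using 2
  ring

theorem abs_taylor_remainder_le_of_isSubgradient (hq : ∀ x, IsSubgradient G (q x) x) {σ : ℝ} {h : E}
    (hσ : ∀ t ∈ Icc (0 : ℝ) 1, ‖q (x + t • h) - q x - B (t • h)‖ ≤ σ * ‖h‖) :
    |G (x + h) - G x - inner ℝ (q x) h - 1 / 2 * inner ℝ (B h) h| ≤ σ * ‖h‖ ^ 2 := by
  have := abs_sub_le_of_slope_bounds (φ := fun t => G (x + t • h) - t * inner ℝ (q x) h)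
    (l := fun t => inner ℝ (q (x + t • h) - q x) h) (d := inner ℝ (B h) h) (ε := σ * ‖h‖ ^ 2)
    (fun s t => by
      have hst := hq (x + s • h) (x + t • h)
      rw [show x + t • h - (x + s • h) = (t - s) • h by module, inner_smul_right] at hst
      rw [inner_sub_left]
      linarith)
    (fun t ht => by
      have hinner : inner ℝ (q (x + t • h) - q x) h - t * inner ℝ (B h) h =
          inner ℝ (q (x + t • h) - q x - B (t • h)) h := by
        rw [inner_sub_left _ (B (t • h)), map_smul, inner_smul_left, conj_trivial]
      rw [hinner, pow_two, ← mul_assoc]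
      exact (abs_real_inner_le_norm _ _).trans
        (mul_le_mul_of_nonneg_right (hσ t ht) (norm_nonneg h)))
  convert this using 2
  simp only [one_smul, zero_smul, add_zero, one_mul, zero_mul]
  ring

theorem hasPeanoExpansionAt_of_hasFDerivAt (hq : ∀ x, IsSubgradient G (q x) x)
    (hB : HasFDerivAt q B x) : HasPeanoExpansionAt G (q x) B x := by
  refine Asymptotics.isLittleO_iff.2 fun σ hσ => ?_
  obtain ⟨ρ, hρ, hball⟩ := Metric.eventually_nhds_iff_ball.1
    ((hasFDerivAt_iff_isLittleO_nhds_zero.1 hB).def hσ)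
  filter_upwards [ball_mem_nhds 0 hρ] with h hh
  rw [Real.norm_eq_abs, norm_pow, norm_norm]
  refine abs_taylor_remainder_le_of_isSubgradient hq fun t ht => ?_
  have hth : ‖t • h‖ ≤ ‖h‖ := by
    rw [norm_smul, Real.norm_of_nonneg ht.1]
    exact mul_le_of_le_one_left (norm_nonneg h) ht.2
  exact (hball _ (mem_ball_zero_iff.2 (hth.trans_lt (mem_ball_zero_iff.1 hh)))).trans
    (mul_le_mul_of_nonneg_left hth hσ.le)

theorem HasPeanoExpansionAt.add (h₁ : HasPeanoExpansionAt F₁ p₁ B₁ x)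
    (h₂ : HasPeanoExpansionAt F₂ p₂ B₂ x) :
    HasPeanoExpansionAt (fun z => F₁ z + F₂ z) (p₁ + p₂) (B₁ + B₂) x := by
  refine (Asymptotics.IsLittleO.add h₁ h₂).congr_left fun h => ?_
  simp only [inner_add_left, _root_.add_apply]
  ring

theorem HasPeanoExpansionAt.sub (h₁ : HasPeanoExpansionAt F₁ p₁ B₁ x)
    (h₂ : HasPeanoExpansionAt F₂ p₂ B₂ x) :
    HasPeanoExpansionAt (fun z => F₁ z - F₂ z) (p₁ - p₂) (B₁ - B₂) x := by
  refine (Asymptotics.IsLittleO.sub h₁ h₂).congr_left fun h => ?_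
  simp only [inner_sub_left, _root_.sub_apply]
  ring

theorem hasPeanoExpansionAt_norm_sq (c : ℝ) (x : E) :
    HasPeanoExpansionAt (fun z => c * ‖z‖ ^ 2) ((2 * c) • x) ((2 * c) • 1) x := by
  refine (Asymptotics.isLittleO_zero _ _).congr_left fun h => ?_
  beta_reduce
  rw [norm_add_sq_real, inner_smul_left, _root_.smul_apply, one_apply_eq_self, inner_smul_left,
    real_inner_self_eq_norm_sq, conj_trivial]
  ring

theorem HasPeanoExpansionAt.inner_nonneg (hF : HasPeanoExpansionAt F p B x)
    (hp : IsSubgradient F p x) (h : E) : 0 ≤ inner ℝ (B h) h := by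
  by_contra! hneg
  have hσ : 0 < -inner ℝ (B h) h / (4 * (‖h‖ ^ 2 + 1)) := div_pos (neg_pos.2 hneg) (by positivity)
  have hline : Tendsto (fun t : ℝ => t • h) (nhds 0) (nhds 0) := by
    have : Continuous fun t : ℝ => t • h := by fun_prop
    simpa only [zero_smul] using this.tendsto 0
  obtain ⟨t, hbound, ht : 0 < t⟩ :=
    (((hline.eventually (hF.def hσ)).filter_mono nhdsWithin_le_nhds).and
      (self_mem_nhdsWithin (s := Ioi (0 : ℝ)))).exists
  have hlower := hp (x + t • h)
  rw [Real.norm_eq_abs, norm_pow, norm_norm, norm_smul, mul_pow, Real.norm_eq_abs, sq_abs,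
    map_smul, inner_smul_left, inner_smul_right (B h), conj_trivial] at hbound
  rw [add_sub_cancel_left] at hlower
  have hquad : 0 ≤ t ^ 2 * (1 / 2 * inner ℝ (B h) h +
      -inner ℝ (B h) h / (4 * (‖h‖ ^ 2 + 1)) * ‖h‖ ^ 2) := by
    linarith [le_of_abs_le hbound]
  have hsmall : -inner ℝ (B h) h / (4 * (‖h‖ ^ 2 + 1)) * ‖h‖ ^ 2 ≤ -inner ℝ (B h) h / 4 := by
    rw [div_mul_eq_mul_div, div_le_div_iff₀ (by positivity) four_pos]
    nlinarith
  linarith [nonneg_of_mul_nonneg_right hquad (by positivity)]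

end SecondOrder

section Alexandrov

variable {E : Type*} [NormedAddCommGroup E] [InnerProductSpace ℝ E]
  {G : E → ℝ} {q J : E → E} {D : E →L[ℝ] E} {x y y' : E}

theorem resolvent_add_eq (hJ : ∀ y, IsSubgradient G (y - J y) (J y))
    (hq : ∀ x, IsSubgradient G (q x) x) (x : E) : J (x + q x) = x := by
  have hx : IsSubgradient G (x + q x - x) x := by simpa only [add_sub_cancel_left] using hq x
  have := norm_sub_le_of_isSubgradient (hJ (x + q x)) hx
  rwa [sub_self, norm_zero, norm_le_zero_iff, sub_eq_zero] at this

theorem lipschitzWith_resolvent (hJ : ∀ y, IsSubgradient G (y - J y) (J y)) :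
    LipschitzWith 1 J :=
  LipschitzWith.of_dist_le_mul fun y y' => by
    simpa only [dist_eq_norm, NNReal.coe_one, one_mul] using
      norm_sub_le_of_isSubgradient (hJ y) (hJ y')

theorem resolvent_add_smul_eq (hJ : ∀ y, IsSubgradient G (y - J y) (J y)) (hy : J y = x)
    (hy' : J y' = x) {t : ℝ} (ht : t ∈ Icc (0 : ℝ) 1) : J (y + t • (y' - y)) = x := by
  have hsub : IsSubgradient G (y + t • (y' - y) - x) x := fun z => by
    have h := mul_le_mul_of_nonneg_left (hJ y z) (sub_nonneg.2 ht.2)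
    have h' := mul_le_mul_of_nonneg_left (hJ y' z) ht.1
    rw [hy] at h
    rw [hy'] at h'
    rw [show y + t • (y' - y) - x = (1 - t) • (y - x) + t • (y' - x) by module, inner_add_left,
      inner_smul_left, inner_smul_left, conj_trivial, conj_trivial]
    linarith
  have := norm_sub_le_of_isSubgradient (hJ (y + t • (y' - y))) hsub
  rwa [sub_self, norm_zero, norm_le_zero_iff, sub_eq_zero] at this

/- The fibres of the resolvent are convex, so a second point of the fibre would give a direction in
which the derivative vanishes. -/
theorem eq_of_resolvent_eq (hJ : ∀ y, IsSubgradient G (y - J y) (J y)) (hD : HasFDerivAt J D y)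
    (hinj : Function.Injective D) (hyy' : J y' = J y) : y' = y := by
  have hline : HasDerivWithinAt (fun t : ℝ => J (y + t • (y' - y))) (D (y' - y)) (Icc 0 1) 0 := by
    have hseg : HasDerivAt (fun t : ℝ => y + t • (y' - y)) (y' - y) 0 := by
      simpa using ((hasDerivAt_id (0 : ℝ)).smul_const (y' - y)).const_add y
    have hD' : HasFDerivAt J D (y + (0 : ℝ) • (y' - y)) := by rwa [zero_smul, add_zero]
    exact (hD'.comp_hasDerivAt 0 hseg).hasDerivWithinAt
  have hconst : HasDerivWithinAt (fun t : ℝ => J (y + t • (y' - y))) 0 (Icc 0 1) 0 :=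
    (hasDerivWithinAt_const _ _ (J y)).congr
      (fun t ht => resolvent_add_smul_eq hJ rfl hyy' ht)
      (resolvent_add_smul_eq hJ rfl hyy' (left_mem_Icc.2 zero_le_one))
  have hzero : D (y' - y) = D 0 := by
    rw [map_zero]
    exact (uniqueDiffOn_Icc zero_lt_one 0 (left_mem_Icc.2 zero_le_one)).eq_deriv _ hline hconst
  exact sub_eq_zero.1 (hinj hzero)

variable [FiniteDimensional ℝ E]

theorem exists_isSubgradient_sub (hq : ∀ x, IsSubgradient G (q x) x) (y : E) :
    ∃ j, IsSubgradient G (y - j) j := by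
  have hconv := convexOn_of_isSubgradient hq
  have hcont : Continuous G := continuousOn_univ.1 (hconv.continuousOn isOpen_univ)
  obtain ⟨j, hj⟩ := exists_forall_le_of_quadratic_le (F := fun z => G z + 1 / 2 * ‖z - y‖ ^ 2)
    (A := G y) (b := ‖q y‖) (k := 1 / 2) (by fun_prop) one_half_pos y fun z => by
      linarith [hq y z, neg_le_of_abs_le (abs_real_inner_le_norm (q y) (z - y))]
  exact ⟨j, isSubgradient_of_forall_le_add_norm_sq hconv hj⟩

theorem exists_eventually_norm_le_of_isSubgradient (hq : ∀ x, IsSubgradient G (q x) x) (x : E) :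
    ∃ K : ℝ, ∀ᶠ z in nhds x, ‖q z‖ ≤ K := by
  obtain ⟨K, s, hs, hK⟩ := (convexOn_of_isSubgradient hq).locallyLipschitzOn isOpen_univ
    (mem_univ x)
  rw [nhdsWithin_univ] at hs
  refine ⟨K, ?_⟩
  filter_upwards [eventually_mem_nhds_iff.2 hs] with z hz using (hq z).norm_le hK hz

theorem continuousAt_add_of_resolvent (hJ : ∀ y, IsSubgradient G (y - J y) (J y))
    (hq : ∀ x, IsSubgradient G (q x) x) (hD : HasFDerivAt J D (x + q x))
    (hinj : Function.Injective D) : ContinuousAt (fun z => z + q z) x := by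
  obtain ⟨K, hK⟩ := exists_eventually_norm_le_of_isSubgradient hq x
  have hcompact : ∀ᶠ z in nhds x, z + q z ∈ closedBall (0 : E) (‖x‖ + 1 + K) := by
    filter_upwards [hK, ball_mem_nhds x one_pos] with z hz hzx
    rw [mem_closedBall_zero_iff]
    have := norm_lt_of_mem_ball hzx
    linarith [norm_add_le z (q z)]
  refine (isCompact_closedBall _ _).tendsto_nhds_of_unique_mapClusterPt hcompact fun y _ hy => ?_
  have hJy : MapClusterPt (J y) (nhds x) fun z => J (z + q z) :=
    hy.continuousAt_comp (lipschitzWith_resolvent hJ).continuous.continuousAt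
  simp only [resolvent_add_eq hJ hq] at hJy
  refine eq_of_resolvent_eq hJ hD hinj ?_
  rw [resolvent_add_eq hJ hq]
  rw [MapClusterPt, map_id'] at hJy
  exact eq_of_nhds_neBot hJy

/- `x ↦ x + q x` is a right inverse of `J`, hence differentiable at the points over which `J` has an
invertible derivative. -/
theorem exists_hasPeanoExpansionAt_of_resolvent (hJ : ∀ y, IsSubgradient G (y - J y) (J y))
    (hq : ∀ x, IsSubgradient G (q x) x) (hdiff : DifferentiableAt ℝ J (x + q x))
    (hdet : (fderiv ℝ J (x + q x)).det ≠ 0) : ∃ B, HasPeanoExpansionAt G (q x) B x := by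
  let D := ContinuousLinearMap.toContinuousLinearEquivOfDetNeZero _ hdet
  have hD : HasFDerivAt J (D : E →L[ℝ] E) (x + q x) := hdiff.hasFDerivAt
  have hinv : HasFDerivAt (fun z => z + q z) (D.symm : E →L[ℝ] E) x :=
    HasFDerivAt.of_local_left_inverse (continuousAt_add_of_resolvent hJ hq hD D.injective) hD
      (Eventually.of_forall (resolvent_add_eq hJ hq))
  have hqB : HasFDerivAt q ((D.symm : E →L[ℝ] E) - ContinuousLinearMap.id ℝ E) x := by
    simpa only [id_eq, add_sub_cancel_left] using hinv.fun_sub (hasFDerivAt_id x)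
  exact ⟨_, hasPeanoExpansionAt_of_hasFDerivAt hq hqB⟩

variable [MeasurableSpace E] [BorelSpace E] (μ : Measure E) [μ.IsAddHaarMeasure]

theorem addHaar_image_eq_zero_of_lipschitzOnWith {f : E → E} {s : Set E} {K : NNReal}
    (hf : LipschitzOnWith K f s) (hs : μ s = 0) : μ (f '' s) = 0 := by
  let ν : Measure E := Measure.hausdorffMeasure (Module.finrank ℝ E)
  have hν : ν (f '' s) ≤ (K : ENNReal) ^ (Module.finrank ℝ E : ℝ) * ν s :=
    hf.hausdorffMeasure_image_le (Nat.cast_nonneg _)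
  rw [Measure.absolutelyContinuous_isAddHaarMeasure ν μ hs, mul_zero, nonpos_iff_eq_zero] at hν
  exact Measure.absolutelyContinuous_isAddHaarMeasure μ ν hν

theorem ae_exists_hasPeanoExpansionAt (hq : ∀ x, IsSubgradient G (q x) x) :
    ∀ᵐ x ∂μ, ∃ B, HasPeanoExpansionAt G (q x) B x := by
  choose J hJ using exists_isSubgradient_sub hq
  have hLip := lipschitzWith_resolvent hJ
  have hnondiff : μ (J '' {y | ¬DifferentiableAt ℝ J y}) = 0 :=
    addHaar_image_eq_zero_of_lipschitzOnWith μ hLip.lipschitzOnWith hLip.ae_differentiableAt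
  have hcritical : μ (J '' {y | DifferentiableAt ℝ J y ∧ (fderiv ℝ J y).det = 0}) = 0 :=
    addHaar_image_eq_zero_of_det_fderivWithin_eq_zero μ
      (fun y hy => hy.1.hasFDerivAt.hasFDerivWithinAt) fun y hy => hy.2
  filter_upwards [compl_mem_ae_iff.2 hnondiff, compl_mem_ae_iff.2 hcritical] with x hx hx'
  have hJx := resolvent_add_eq hJ hq x
  have hdiff : DifferentiableAt ℝ J (x + q x) := of_not_not fun h => hx ⟨_, h, hJx⟩
  exact exists_hasPeanoExpansionAt_of_resolvent hJ hq hdiff fun h => hx' ⟨_, ⟨hdiff, h⟩, hJx⟩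

end Alexandrov

section Jensen

variable {E : Type*} [NormedAddCommGroup E] [InnerProductSpace ℝ E]
  {F H : E → ℝ} {q : E → E} {p p' x x' : E} {C c : ℝ}

theorem norm_le_of_forall_inner_le {d e : E} (hc : 0 < c)
    (h : ∀ k, inner ℝ d k ≤ c * ‖k + e‖ ^ 2) : ‖d‖ ≤ 4 * c * ‖e‖ := by
  have hk := h ((1 / (4 * c)) • d)
  have hnorm : ‖(1 / (4 * c)) • d + e‖ ≤ 1 / (4 * c) * ‖d‖ + ‖e‖ := by
    simpa only [norm_smul, Real.norm_of_nonneg (by positivity : 0 ≤ 1 / (4 * c))] using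
      norm_add_le ((1 / (4 * c)) • d) e
  have hle : 1 / (4 * c) * ‖d‖ ^ 2 ≤ c * (1 / (4 * c) * ‖d‖ + ‖e‖) ^ 2 := by
    rw [inner_smul_right, real_inner_self_eq_norm_sq] at hk
    exact hk.trans (by gcongr)
  have hsq : (2 * ‖d‖) ^ 2 ≤ (‖d‖ + 4 * c * ‖e‖) ^ 2 := by
    have := mul_le_mul_of_nonneg_left hle (by positivity : 0 ≤ 16 * c)
    field_simp at this
    linarith
  linarith [(pow_le_pow_iff_left₀ (by positivity) (by positivity) two_ne_zero).1 hsq]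

theorem IsSubgradient.norm_sub_le_of_le_quadratic (hc : 0 < c) (hp : IsSubgradient F p x)
    (hquad : ∀ z, F z ≤ F x' + inner ℝ p' (z - x') + c * ‖z - x'‖ ^ 2)
    (hx : F x' + inner ℝ p' (x - x') ≤ F x) : ‖p - p'‖ ≤ 4 * c * ‖x - x'‖ := by
  refine norm_le_of_forall_inner_le hc fun k => ?_
  have hlower := hp (x + k)
  have hupper := hquad (x + k)
  rw [add_sub_cancel_left] at hlower
  rw [show x + k - x' = k + (x - x') by abel, inner_add_right] at hupper
  rw [inner_sub_left]
  linarith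

theorem mul_norm_sq_sub_le (hq : ∀ x, IsSubgradient H (q x) x) (x z : E) :
    c * ‖z‖ ^ 2 - H z ≤
      c * ‖x‖ ^ 2 - H x + inner ℝ ((2 * c) • x - q x) (z - x) + c * ‖z - x‖ ^ 2 := by
  have hsq := norm_add_sq_real x (z - x)
  rw [add_sub_cancel] at hsq
  rw [inner_sub_left, inner_smul_left, conj_trivial, hsq]
  linarith [hq x z]

theorem eq_of_isSubgradient_mul_norm_sq_sub (hc : 0 < c) (hq : ∀ x, IsSubgradient H (q x) x)
    (hp : IsSubgradient (fun z => c * ‖z‖ ^ 2 - H z) p x) : p = (2 * c) • x - q x := by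
  have := hp.norm_sub_le_of_le_quadratic hc (mul_norm_sq_sub_le hq x)
    (by rw [sub_self, inner_zero_right, add_zero])
  rwa [sub_self, norm_zero, mul_zero, norm_le_zero_iff, sub_eq_zero] at this

theorem lipschitzOnWith_isSubgradient_mul_norm_sq_sub (hc : 0 < c)
    (hq : ∀ x, IsSubgradient H (q x) x) :
    LipschitzOnWith (4 * c).toNNReal (fun x => (2 * c) • x - q x)
      {x | IsSubgradient (fun z => c * ‖z‖ ^ 2 - H z) ((2 * c) • x - q x) x} :=
  LipschitzOnWith.of_dist_le_mul fun x hx x' hx' => by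
    rw [dist_eq_norm, dist_eq_norm, Real.coe_toNNReal _ (by positivity)]
    rw [mem_ofPred_eq] at hx
    exact hx.norm_sub_le_of_le_quadratic hc (mul_norm_sq_sub_le hq x') (hx' x)

theorem exists_isSubgradient_mul_norm_sq_sub [FiniteDimensional ℝ E] (hc : 0 < c)
    (hq : ∀ x, IsSubgradient H (q x) x) (hC : ∀ x, ‖q x‖ ≤ C) (p : E) :
    ∃ x, IsSubgradient (fun z => c * ‖z‖ ^ 2 - H z) p x := by
  have hH : Continuous H :=
    continuousOn_univ.1 ((convexOn_of_isSubgradient hq).continuousOn isOpen_univ)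
  obtain ⟨x, hx⟩ := exists_forall_le_of_quadratic_le (b := C + ‖p‖)
    (F := fun z => c * ‖z‖ ^ 2 - H z - inner ℝ p z) (by fun_prop) hc 0 fun z => by
      have hHz := hq z 0
      rw [zero_sub, inner_neg_right] at hHz
      have hqz := (real_inner_le_norm (q z) z).trans
        (mul_le_mul_of_nonneg_right (hC z) (norm_nonneg z))
      rw [sub_zero]
      change -H 0 - _ + _ ≤ _
      linarith [real_inner_le_norm p z]
  refine ⟨x, fun z => ?_⟩
  rw [inner_sub_right]
  linarith [hx z]

theorem IsSubgradient.mul_norm_le (hc : 0 < c) (hq : ∀ x, IsSubgradient H (q x) x)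
    (hC : ∀ x, ‖q x‖ ≤ C) (hp : IsSubgradient (fun z => c * ‖z‖ ^ 2 - H z) p x) :
    2 * c * ‖x‖ ≤ C + ‖p‖ := by
  have hx : (2 * c) • x = q x + p := by
    rw [eq_of_isSubgradient_mul_norm_sq_sub hc hq hp, add_sub_cancel]
  calc 2 * c * ‖x‖ = ‖(2 * c) • x‖ := by rw [norm_smul, Real.norm_of_nonneg (by positivity)]
    _ ≤ ‖q x‖ + ‖p‖ := hx ▸ norm_add_le _ _
    _ ≤ C + ‖p‖ := by gcongr; exact hC x

/- Jensen's lemma. The slopes near `0` are all attained, and the slope is a Lipschitz function of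
the contact point, so the contact points cannot all lie in a null set. -/
theorem exists_notMem_isSubgradient_mul_norm_sq_sub [FiniteDimensional ℝ E] [MeasurableSpace E]
    [BorelSpace E] (μ : Measure E) [μ.IsAddHaarMeasure] (hc : 0 < c)
    (hq : ∀ x, IsSubgradient H (q x) x) (hC : ∀ x, ‖q x‖ ≤ C) {N : Set E} (hN : μ N = 0)
    (x₁ : E) {β : ℝ} (hβ : 0 < β) :
    ∃ x ∉ N, c * ‖x‖ ^ 2 - H x ≤ c * ‖x₁‖ ^ 2 - H x₁ + β ∧
      IsSubgradient (fun z => c * ‖z‖ ^ 2 - H z) ((2 * c) • x - q x) x := by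
  have hC0 : 0 ≤ C := (norm_nonneg _).trans (hC 0)
  choose X hX using exists_isSubgradient_mul_norm_sq_sub hc hq hC
  have hslope : ∀ p, p = (2 * c) • X p - q (X p) := fun p =>
    eq_of_isSubgradient_mul_norm_sq_sub hc hq (hX p)
  let R := (C + 1) / (2 * c) + ‖x₁‖ + 1
  have hR : 0 < R := by positivity
  let δ := min 1 (β / R)
  have hδ : 0 < δ := by positivity
  have hvalue : ∀ p, ‖p‖ < δ → c * ‖X p‖ ^ 2 - H (X p) ≤ c * ‖x₁‖ ^ 2 - H x₁ + β := fun p hp => by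
    have hXp : ‖X p‖ ≤ (C + 1) / (2 * c) := by
      rw [le_div_iff₀' (by positivity)]
      linarith [(hX p).mul_norm_le hc hq hC, hp.trans_le (min_le_left _ _)]
    have hdist : ‖x₁ - X p‖ ≤ R := by linarith [norm_sub_le x₁ (X p)]
    have hinner : ‖p‖ * ‖x₁ - X p‖ ≤ β / R * R := by
      gcongr
      exact hp.le.trans (min_le_right _ _)
    rw [div_mul_cancel₀ _ hR.ne'] at hinner
    linarith [hX p x₁, neg_le_of_abs_le (abs_real_inner_le_norm p (x₁ - X p))]
  by_contra! hcon
  have hball : ball (0 : E) δ ⊆ (fun x => (2 * c) • x - q x) ''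
      ({x | IsSubgradient (fun z => c * ‖z‖ ^ 2 - H z) ((2 * c) • x - q x) x} ∩ N) := by
    intro p hp
    have hXp : IsSubgradient (fun z => c * ‖z‖ ^ 2 - H z) ((2 * c) • X p - q (X p)) (X p) := by
      rw [← hslope p]
      exact hX p
    refine ⟨X p, ⟨hXp, ?_⟩, (hslope p).symm⟩
    by_contra hnot
    exact hcon _ hnot (hvalue p (mem_ball_zero_iff.1 hp)) hXp
  have hnull := addHaar_image_eq_zero_of_lipschitzOnWith μ
    ((lipschitzOnWith_isSubgradient_mul_norm_sq_sub hc hq).mono inter_subset_left)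
    (measure_mono_null inter_subset_right hN)
  exact (measure_ball_pos μ 0 hδ).ne' (measure_mono_null hball hnull)

end Jensen

section TheoremOnSums

variable {E : Type*} [NormedAddCommGroup E] {K : Set E} {u : E → ℝ}

/-- `s` selects, for every `x`, a point of `K` at which the supremum `sup_z u z - (l / 2) ‖x - z‖²`
defining the sup-convolution of `u` over `K` is attained. -/
def IsProximalSelection (K : Set E) (u : E → ℝ) (l : ℝ) (s : E → E) : Prop :=
  ∀ x, s x ∈ K ∧ IsMaxOn (fun z => u z - l / 2 * ‖x - z‖ ^ 2) K (s x)

theorem exists_isProximalSelection (hK : IsCompact K) (hne : K.Nonempty)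
    (hu : UpperSemicontinuousOn u K) (l : ℝ) : ∃ s, IsProximalSelection K u l s := by
  have hmax : ∀ x, ∃ z ∈ K, IsMaxOn (fun z => u z - l / 2 * ‖x - z‖ ^ 2) K z := fun x => by
    have hcont : Continuous fun z => -(l / 2 * ‖x - z‖ ^ 2) := by fun_prop
    simpa only [sub_eq_add_neg] using
      (hu.add (hcont.upperSemicontinuous.upperSemicontinuousOn K)).exists_isMaxOn hne hK
  choose s hsK hs using hmax
  exact ⟨s, fun x => ⟨hsK x, hs x⟩⟩

variable [InnerProductSpace ℝ E] {v : E → ℝ} {l : ℝ} {s t : E → E} {A : E →L[ℝ] E} {x : E}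

/-- The sup-convolution of `u` attained at the points `s x`, made convex by adding
`(l / 2) ‖x‖²`. -/
noncomputable def proximalPotential (u : E → ℝ) (l : ℝ) (s : E → E) (x : E) : ℝ :=
  u (s x) - l / 2 * ‖x - s x‖ ^ 2 + l / 2 * ‖x‖ ^ 2

/-- `u` has, relative to `K`, the second-order upper expansion with slope `p` and second derivative
`A` at `x`: in the literature, `(p, A)` belongs to the superjet of `u` at `x`. -/
def IsSuperjet (K : Set E) (u : E → ℝ) (x p : E) (A : E →L[ℝ] E) : Prop :=
  ∀ σ > 0, ∀ᶠ z in nhdsWithin x K, u z ≤ u x + quadPoly p A x z + σ * ‖z - x‖ ^ 2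

theorem IsProximalSelection.le_proximalPotential (hs : IsProximalSelection K u l s) {z : E}
    (hz : z ∈ K) (x : E) :
    u z - l / 2 * ‖z‖ ^ 2 + l * inner ℝ z x ≤ proximalPotential u l s x := by
  have hmax : u z - l / 2 * ‖x - z‖ ^ 2 ≤ u (s x) - l / 2 * ‖x - s x‖ ^ 2 := (hs x).2 hz
  rw [norm_sub_sq_real, real_inner_comm] at hmax
  rw [proximalPotential]
  linarith

theorem proximalPotential_eq (u : E → ℝ) (l : ℝ) (s : E → E) (x : E) :
    proximalPotential u l s x = u (s x) - l / 2 * ‖s x‖ ^ 2 + l * inner ℝ (s x) x := by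
  rw [proximalPotential, norm_sub_sq_real, real_inner_comm]
  ring

theorem IsProximalSelection.isSubgradient (hs : IsProximalSelection K u l s) (x : E) :
    IsSubgradient (proximalPotential u l s) (l • s x) x := fun z => by
  have := hs.le_proximalPotential (hs x).1 z
  rw [proximalPotential_eq, inner_smul_left, inner_sub_right, conj_trivial]
  linarith

/- The magic property of the sup-convolution: translating the expansion at `x` by `s x - x`. -/
theorem IsProximalSelection.isSuperjet (hs : IsProximalSelection K u l s)
    (hA : HasPeanoExpansionAt (proximalPotential u l s) (l • s x) A x) :
    IsSuperjet K u (s x) (l • (s x - x)) (A - l • 1) := fun σ hσ => by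
  have htranslate : Tendsto (fun z => z - s x) (nhdsWithin (s x) K) (nhds 0) := by
    have : Continuous fun z => z - s x := by fun_prop
    simpa only [sub_self] using (this.tendsto (s x)).mono_left nhdsWithin_le_nhds
  filter_upwards [htranslate.eventually (hA.def hσ), self_mem_nhdsWithin] with z hz hzK
  obtain ⟨h, rfl⟩ : ∃ h, z = s x + h := ⟨z - s x, (add_sub_cancel _ _).symm⟩
  have hpot := hs.le_proximalPotential hzK (x + h)
  rw [add_sub_cancel_left, Real.norm_eq_abs, norm_pow, norm_norm] at hz
  have hupper := le_of_abs_le hz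
  rw [proximalPotential_eq u l s x, inner_smul_left, conj_trivial] at hupper
  rw [norm_add_sq_real, inner_add_left, inner_add_right, inner_add_right,
    real_inner_self_eq_norm_sq] at hpot
  rw [quadPoly, add_sub_cancel_left, inner_smul_left, inner_sub_left, _root_.sub_apply,
    _root_.smul_apply, one_apply_eq_self, inner_sub_left, inner_smul_left, conj_trivial,
    real_inner_self_eq_norm_sq, real_inner_comm h x]
  linarith

theorem IsProximalSelection.exists_norm_le (hs : IsProximalSelection K u l s) (hK : IsCompact K)
    (hl : 0 ≤ l) : ∃ C, ∀ x, ‖l • s x‖ ≤ C := by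
  obtain ⟨C, hC⟩ := hK.isBounded.exists_norm_le
  refine ⟨l * C, fun x => ?_⟩
  rw [norm_smul, Real.norm_of_nonneg hl]
  exact mul_le_mul_of_nonneg_left (hC _ (hs x).1) hl

/- The sup-convolution dominates the function, and `‖s - t‖² ≤ 2 ‖x - s‖² + 2 ‖x - t‖²`. -/
theorem IsProximalSelection.add_sub_le (hl : 0 ≤ l) (hs : IsProximalSelection K u l s)
    (ht : IsProximalSelection K v l t) {x₁ : E} (hx₁ : x₁ ∈ K) {β : ℝ}
    (hx : l * ‖x‖ ^ 2 - (proximalPotential u l s x + proximalPotential v l t x) ≤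
      l * ‖x₁‖ ^ 2 - (proximalPotential u l s x₁ + proximalPotential v l t x₁) + β) :
    u x₁ + v x₁ - β ≤ u (s x) + v (t x) - l / 4 * ‖s x - t x‖ ^ 2 := by
  have hu := hs.le_proximalPotential hx₁ x₁
  have hv := ht.le_proximalPotential hx₁ x₁
  rw [real_inner_self_eq_norm_sq] at hu hv
  have hparallelogram := parallelogram_law_with_norm ℝ (x - t x) (x - s x)
  rw [sub_sub_sub_cancel_left] at hparallelogram
  have hdist : l / 4 * ‖s x - t x‖ ^ 2 ≤ l / 4 * (2 * (‖x - t x‖ ^ 2 + ‖x - s x‖ ^ 2)) := by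
    gcongr
    nlinarith [sq_nonneg ‖x - t x + (x - s x)‖]
  rw [proximalPotential, proximalPotential] at hx
  linarith

theorem exists_isSuperjet_of_upperSemicontinuousOn [FiniteDimensional ℝ E] (hK : IsCompact K)
    (hu : UpperSemicontinuousOn u K) (hv : UpperSemicontinuousOn v K) {x₁ : E} (hx₁ : x₁ ∈ K)
    {β : ℝ} (hβ : 0 < β) (hl : 0 < l) :
    ∃ s ∈ K, ∃ t ∈ K, u x₁ + v x₁ - β ≤ u s + v t - l / 4 * ‖s - t‖ ^ 2 ∧
      ∃ p m A B, IsSuperjet K u s p A ∧ IsSuperjet K v t m B ∧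
        ∀ h, inner ℝ (A h) h + inner ℝ (B h) h ≤ 0 := by
  borelize E
  obtain ⟨s, hs⟩ := exists_isProximalSelection hK ⟨x₁, hx₁⟩ hu l
  obtain ⟨t, ht⟩ := exists_isProximalSelection hK ⟨x₁, hx₁⟩ hv l
  obtain ⟨C, hC⟩ := hs.exists_norm_le hK hl.le
  obtain ⟨C', hC'⟩ := ht.exists_norm_le hK hl.le
  have hexp := (ae_exists_hasPeanoExpansionAt volume hs.isSubgradient).and
    (ae_exists_hasPeanoExpansionAt volume ht.isSubgradient)
  obtain ⟨x, hx, hvalue, hcontact⟩ := exists_notMem_isSubgradient_mul_norm_sq_sub volume hl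
    (fun x => (hs.isSubgradient x).add (ht.isSubgradient x))
    (fun x => (norm_add_le _ _).trans (add_le_add (hC x) (hC' x))) hexp x₁ hβ
  obtain ⟨⟨A, hA⟩, B, hB⟩ := of_not_not hx
  refine ⟨s x, (hs x).1, t x, (ht x).1, hs.add_sub_le hl.le ht hx₁ hvalue, _, _, _, _,
    hs.isSuperjet hA, ht.isSuperjet hB, fun h => ?_⟩
  have := ((hasPeanoExpansionAt_norm_sq l x).sub (hA.add hB)).inner_nonneg hcontact h
  simp only [_root_.sub_apply, _root_.add_apply, _root_.smul_apply, one_apply_eq_self,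
    inner_sub_left, inner_add_left, real_inner_smul_left] at this ⊢
  linarith

end TheoremOnSums

section Comparison

theorem le_of_forall_pos_le_add_mul {x y c : ℝ} (h : ∀ σ > 0, x ≤ y + σ * c) : x ≤ y := by
  have hlim : Tendsto (fun σ : ℝ => y + σ * c) (nhdsWithin 0 (Ioi 0)) (nhds y) := by
    have : Continuous fun σ : ℝ => y + σ * c := by fun_prop
    simpa only [zero_mul, add_zero] using (this.tendsto 0).mono_left nhdsWithin_le_nhds
  exact ge_of_tendsto hlim (eventually_mem_nhdsWithin.mono h)

variable {n : ℕ} {a : Fin n → ℝ} {Ω : Set (En n)} {f f' u v : En n → ℝ}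

theorem IsSuperjet.mono {E : Type*} [NormedAddCommGroup E] [InnerProductSpace ℝ E] {K L : Set E}
    {u : E → ℝ} {x p : E} {A : E →L[ℝ] E} (hA : IsSuperjet K u x p A) (hLK : L ⊆ K) :
    IsSuperjet L u x p A :=
  fun σ hσ => (hA σ hσ).filter_mono (nhdsWithin_mono x hLK)

theorem IsViscSubsol.le_Ma_hess_quadPoly (ha : ∀ i, 0 ≤ a i) (hu : IsViscSubsol a Ω f u)
    {s p : En n} {A : En n →L[ℝ] En n} (hs : s ∈ Ω) (hA : IsSuperjet Ω u s p A) :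
    f s ≤ Ma a (hess (quadPoly p A s) s) := by
  refine le_of_forall_pos_le_add_mul (c := 2 * ∑ i, a i) fun σ hσ => ?_
  have htest := hu s hs (fun z => quadPoly p A s z + paraboloid 0 σ s z)
    ((contDiff_quadPoly p A s).add (contDiff_paraboloid 0 σ s)) <| by
      filter_upwards [hA σ hσ] with z hz
      simp only [quadPoly, paraboloid, sub_self, map_zero, inner_zero_right, norm_zero] at hz ⊢
      linarith
  rw [Ma_hess_add_paraboloid ha (contDiff_quadPoly p A s)] at htest
  linarith

theorem IsViscSupersol.Ma_hess_quadPoly_neg_le (ha : ∀ i, 0 ≤ a i)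
    (hv : IsViscSupersol a Ω f fun x => -v x) {t m : En n} {B : En n →L[ℝ] En n} (ht : t ∈ Ω)
    (hB : IsSuperjet Ω v t m B) : Ma a (hess (quadPoly (-m) (-B) t) t) ≤ f t := by
  refine le_of_forall_pos_le_add_mul (c := 2 * ∑ i, a i) fun σ hσ => ?_
  have htest := hv t ht (fun z => quadPoly (-m) (-B) t z + paraboloid 0 (-σ) t z)
    ((contDiff_quadPoly (-m) (-B) t).add (contDiff_paraboloid 0 (-σ) t)) <| by
      filter_upwards [hB σ hσ] with z hz
      simp only [quadPoly, paraboloid, sub_self, map_zero, inner_zero_right, norm_zero,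
        _root_.neg_apply, inner_neg_left] at hz ⊢
      linarith
  rw [Ma_hess_add_paraboloid ha (contDiff_quadPoly (-m) (-B) t)] at htest
  linarith

theorem le_of_isSuperjet (ha : ∀ i, 0 ≤ a i) (hu : IsViscSubsol a Ω f u)
    (hv : IsViscSupersol a Ω f' fun x => -v x) {s t p m : En n} {A B : En n →L[ℝ] En n}
    (hs : s ∈ Ω) (ht : t ∈ Ω) (hA : IsSuperjet Ω u s p A) (hB : IsSuperjet Ω v t m B)
    (hAB : ∀ h, inner ℝ (A h) h + inner ℝ (B h) h ≤ 0) : f s ≤ f' t := by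
  refine (hu.le_Ma_hess_quadPoly ha hs hA).trans <|
    le_trans ?_ (hv.Ma_hess_quadPoly_neg_le ha ht hB)
  refine Ma_mono ha (isHermitian_hess (contDiff_quadPoly p A s) s)
    (isHermitian_hess (contDiff_quadPoly (-m) (-B) t) t) fun h => ?_
  rw [quadForm_hess_quadPoly, quadForm_hess_quadPoly, _root_.neg_apply, inner_neg_left]
  linarith [hAB h]

theorem exists_frequently_nhdsWithin_prod {E : Type*} [NormedAddCommGroup E] {K : Set E}
    (hK : IsCompact K) {u v : E → ℝ} (hu : UpperSemicontinuousOn u K)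
    (hv : UpperSemicontinuousOn v K) {m : ℝ} {P : E → E → Prop}
    (h : ∀ l > 0, ∃ s ∈ K, ∃ t ∈ K, m ≤ u s + v t - l / 4 * ‖s - t‖ ^ 2 ∧ P s t) :
    ∃ y ∈ K, m ≤ u y + v y ∧ ∃ᶠ z in nhdsWithin y K ×ˢ nhdsWithin y K, P z.1 z.2 := by
  choose s hs t ht hm hP using fun k : ℕ => h (k + 1) (by positivity)
  obtain ⟨Cu, hCu⟩ := hu.bddAbove_of_isCompact hK
  obtain ⟨Cv, hCv⟩ := hv.bddAbove_of_isCompact hK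
  have hsq : ∀ k, ‖s k - t k‖ ^ 2 ≤ 4 * (Cu + Cv - m) * (1 / ((k : ℝ) + 1)) := fun k => by
    have hsCu := hCu (mem_image_of_mem u (hs k))
    have htCv := hCv (mem_image_of_mem v (ht k))
    rw [mul_one_div, le_div_iff₀ (by positivity)]
    linarith [hm k]
  have hsq0 : Tendsto (fun k => ‖s k - t k‖ ^ 2) atTop (nhds 0) :=
    squeeze_zero (fun k => sq_nonneg _) hsq (by
      simpa only [mul_zero] using
        (tendsto_one_div_add_atTop_nhds_zero_nat (𝕜 := ℝ)).const_mul (4 * (Cu + Cv - m)))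
  have hdiff : Tendsto (fun k => s k - t k) atTop (nhds 0) := by
    simpa only [Real.sqrt_sq (norm_nonneg _), Real.sqrt_zero,
      ← tendsto_zero_iff_norm_tendsto_zero] using hsq0.sqrt
  obtain ⟨y, hy, φ, hφ, hlim⟩ := hK.tendsto_subseq hs
  have hlim' : Tendsto (t ∘ φ) atTop (nhds y) := by
    simpa only [sub_zero, Function.comp_def, sub_sub_cancel] using
      hlim.sub (hdiff.comp hφ.tendsto_atTop)
  have hsy : Tendsto (s ∘ φ) atTop (nhdsWithin y K) :=
    tendsto_nhdsWithin_iff.2 ⟨hlim, Eventually.of_forall fun k => hs _⟩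
  have hty : Tendsto (t ∘ φ) atTop (nhdsWithin y K) :=
    tendsto_nhdsWithin_iff.2 ⟨hlim', Eventually.of_forall fun k => ht _⟩
  refine ⟨y, hy, ?_, (hsy.prodMk hty).frequently (Frequently.of_forall fun k => hP (φ k))⟩
  by_contra! hlt
  have hgap : 0 < (m - (u y + v y)) / 2 := by linarith
  obtain ⟨k, hku, hkv⟩ := ((hsy.eventually (hu y hy _ (lt_add_of_pos_right (u y) hgap))).and
    (hty.eventually (hv y hy _ (lt_add_of_pos_right (v y) hgap)))).exists
  have hpen : 0 ≤ ((φ k : ℝ) + 1) / 4 * ‖s (φ k) - t (φ k)‖ ^ 2 := by positivity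
  simp only [Function.comp] at hku hkv
  linarith [hm (φ k)]

theorem comparison_of_lt (ha : ∀ i, 0 ≤ a i) (hΩo : IsOpen Ω) (hΩb : Bornology.IsBounded Ω)
    (hf : ContinuousOn f Ω) (hf' : ContinuousOn f' Ω) (hff' : ∀ x ∈ Ω, f' x < f x)
    (hu : UpperSemicontinuousOn u (closure Ω)) (hv : UpperSemicontinuousOn v (closure Ω))
    (hsub : IsViscSubsol a Ω f u) (hsup : IsViscSupersol a Ω f' fun x => -v x)
    (hbd : ∀ x ∈ frontier Ω, u x + v x ≤ 0) : ∀ x ∈ closure Ω, u x + v x ≤ 0 := by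
  intro x hx
  by_contra! hpos
  obtain ⟨y, hy, hym, hfreq⟩ := exists_frequently_nhdsWithin_prod hΩb.isCompact_closure hu hv
    (m := (u x + v x) / 2) (P := fun s t => s ∈ Ω → t ∈ Ω → f s ≤ f' t) fun l hl => by
      obtain ⟨s, hs, t, ht, hst, p, m, A, B, hA, hB, hAB⟩ :=
        exists_isSuperjet_of_upperSemicontinuousOn hΩb.isCompact_closure hu hv hx
          (half_pos hpos) hl
      exact ⟨s, hs, t, ht, by linarith, fun hsΩ htΩ => le_of_isSuperjet ha hsub hsup hsΩ htΩ
        (hA.mono subset_closure) (hB.mono subset_closure) hAB⟩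
  have hyΩ : y ∈ Ω := by
    by_contra hyΩ
    linarith [hbd y (hΩo.frontier_eq ▸ ⟨hy, hyΩ⟩)]
  have hΩy : ∀ᶠ s in nhdsWithin y (closure Ω), s ∈ Ω :=
    mem_nhdsWithin_of_mem_nhds (hΩo.mem_nhds hyΩ)
  obtain ⟨c, hf'c, hcf⟩ := exists_between (hff' y hyΩ)
  have hfy : ∀ᶠ s in nhdsWithin y (closure Ω), c < f s := mem_nhdsWithin_of_mem_nhds
    ((hf.continuousAt (hΩo.mem_nhds hyΩ)).eventually_const_lt hcf)
  have hf'y : ∀ᶠ t in nhdsWithin y (closure Ω), f' t < c := mem_nhdsWithin_of_mem_nhds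
    ((hf'.continuousAt (hΩo.mem_nhds hyΩ)).eventually_lt_const hf'c)
  obtain ⟨⟨s, t⟩, hst, ⟨hs, hcs⟩, ht, htc⟩ :=
    (hfreq.and_eventually ((hΩy.and hfy).prod_mk (hΩy.and hf'y))).exists
  exact ((hst hs ht).trans_lt htc).not_gt hcs

theorem IsViscSubsol.add_paraboloid (ha : ∀ i, 0 ≤ a i) (hu : IsViscSubsol a Ω f u) (c k : ℝ)
    (x₀ : En n) : IsViscSubsol a Ω (fun x => f x + 2 * k * ∑ i, a i)
      (fun x => u x + paraboloid c k x₀ x) := by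
  intro x hx φ hφ hmax
  have htest := hu x hx (fun z => φ z + paraboloid (-c) (-k) x₀ z)
    (hφ.add (contDiff_paraboloid (-c) (-k) x₀)) <| by
      filter_upwards [hmax] with z hz
      simp only [paraboloid] at hz ⊢
      linarith
  rw [Ma_hess_add_paraboloid ha hφ] at htest
  linarith

theorem ClassAbar.sum_pos (ha : ClassAbar a) : 0 < ∑ i, a i :=
  Finset.sum_pos' (fun i _ => ha.1 i) (ha.2.imp fun i hi => ⟨Finset.mem_univ i, hi⟩)

theorem comparison (ha : ClassAbar a) (hΩo : IsOpen Ω) (hΩb : Bornology.IsBounded Ω)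
    (hf : ContinuousOn f Ω) (hu : UpperSemicontinuousOn u (closure Ω))
    (hv : UpperSemicontinuousOn v (closure Ω)) (hsub : IsViscSubsol a Ω f u)
    (hsup : IsViscSupersol a Ω f fun x => -v x) (hbd : ∀ x ∈ frontier Ω, u x + v x ≤ 0) :
    ∀ x ∈ closure Ω, u x + v x ≤ 0 := by
  obtain ⟨R, hR⟩ := hΩb.isCompact_closure.isBounded.exists_norm_le
  have hRsq : ∀ x ∈ closure Ω, ‖x‖ ^ 2 ≤ R ^ 2 := fun x hx =>
    pow_le_pow_left₀ (norm_nonneg x) (hR x hx) 2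
  intro x hx
  refine le_of_forall_pos_le_add_mul (c := R ^ 2) fun η hη => ?_
  have hsum := ha.sum_pos
  have hper := comparison_of_lt ha.1 hΩo hΩb (hf.add continuousOn_const) hf
    (fun z _ => lt_add_of_pos_right (f z) (by positivity))
    (hu.add ((contDiff_paraboloid (-η * R ^ 2) η 0).continuous.upperSemicontinuous
      |>.upperSemicontinuousOn _)) hv (hsub.add_paraboloid ha.1 (-η * R ^ 2) η 0) hsup
    (fun z hz => by
      have := mul_le_mul_of_nonneg_left (hRsq z (frontier_subset_closure hz)) hη.le
      rw [paraboloid, sub_zero]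
      linarith [hbd z hz]) x hx
  have : 0 ≤ η * ‖x‖ ^ 2 := by positivity
  rw [paraboloid, sub_zero] at hper
  linarith

theorem comparison_of_continuousOn (ha : ClassAbar a) (hΩo : IsOpen Ω) (hΩb : Bornology.IsBounded Ω)
    (hf : ContinuousOn f Ω) (hu : ContinuousOn u (closure Ω)) (hv : ContinuousOn v (closure Ω))
    (hsub : IsViscSubsol a Ω f u) (hsup : IsViscSupersol a Ω f v)
    (hbd : ∀ x ∈ frontier Ω, u x ≤ v x) : ∀ x ∈ closure Ω, u x ≤ v x := fun x hx => by
  have := comparison ha hΩo hΩb hf hu.upperSemicontinuousOn hv.neg.upperSemicontinuousOn hsub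
    (by simpa only [Pi.neg_apply, neg_neg] using hsup)
    (fun y hy => by simpa using hbd y hy) x hx
  simpa using this

end Comparison

section Barrier

variable {n : ℕ} {a : Fin n → ℝ} {Ω : Set (En n)} {x y z₀ : En n} {c d α β κ p t M : ℝ}

/-- `T` is a barrier at `y` on the scale `r`: on `closure Ω ∩ ball y r` it is nonnegative and at
least `L` away from `ball y (r / 2)`, it is at most `γ` at `y`, and `T` is a strict supersolution
for the right-hand side `-M` while `-T` is a strict subsolution for `M`. -/
structure IsBarrier (a : Fin n → ℝ) (Ω : Set (En n)) (y : En n) (L M γ r : ℝ)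
    (T : En n → ℝ) : Prop where
  contDiff : ContDiff ℝ 2 T
  apply_le : T y ≤ γ
  nonneg : ∀ x ∈ closure Ω ∩ ball y r, 0 ≤ T x
  le_of_le_dist : ∀ x ∈ closure Ω ∩ ball y r, r / 2 ≤ dist x y → L ≤ T x
  Ma_hess_lt : ∀ x ∈ closure Ω ∩ ball y r, Ma a (hess T x) < -M
  lt_Ma_hess_neg : ∀ x ∈ closure Ω ∩ ball y r, M < Ma a (hess (fun z => -T z) x)

/-- `Ω` has barriers of every height `L` and strength `M` on all small scales around `y`, whose
value at `y` is below `L` by an amount independent of the scale. -/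
def HasBarriersAt (a : Fin n → ℝ) (Ω : Set (En n)) (y : En n) : Prop :=
  ∀ L > 0, ∀ M, ∃ γ < L, ∀ᶠ r in nhdsWithin 0 (Ioi 0), ∃ T, IsBarrier a Ω y L M γ r T

/-- The exterior corkscrew condition at `y`: on every small scale `t`, some point at distance `t`
from `y` has distance at least `κ * t` from `Ω`. -/
def ExteriorCorkscrewAt (Ω : Set (En n)) (y : En n) : Prop :=
  ∃ κ > 0, ∀ᶠ t in nhdsWithin (0 : ℝ) (Ioi 0), ∃ z, dist z y = t ∧
    ∀ x ∈ closure Ω, κ * t ≤ dist x z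

theorem contDiff_gaussian (c d β : ℝ) (z₀ : En n) :
    ContDiff ℝ 2 fun z => c + d * Real.exp (-β * ‖z - z₀‖ ^ 2) :=
  contDiff_radial (h := fun s => c + d * Real.exp (-β * s)) (by fun_prop) z₀

theorem quadForm_hess_gaussian (c d β : ℝ) (z₀ x v : En n) :
    quadForm (hess (fun z => c + d * Real.exp (-β * ‖z - z₀‖ ^ 2)) x) v =
      2 * β * (d * Real.exp (-β * ‖x - z₀‖ ^ 2)) *
        (2 * β * inner ℝ (x - z₀) v ^ 2 - ‖v‖ ^ 2) := by
  have hexp (s : ℝ) : HasDerivAt (fun s => Real.exp (-β * s)) (Real.exp (-β * s) * -β) s := by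
    simpa only [mul_one, id] using ((hasDerivAt_id s).const_mul (-β)).exp
  rw [quadForm_hess_radial (h := fun s => c + d * Real.exp (-β * s)) (by fun_prop)
    (fun s => ((hexp s).const_mul d).const_add c) (((hexp _).mul_const (-β)).const_mul d)]
  ring

theorem lt_gaussian_mul_sub {s m k A w S : ℝ} (hβ : 0 < β) (hp : 0 < p) (hA : 0 ≤ A)
    (hAw : A ≤ w) (hS : S + 1 ≤ 2 * m * A) (hm : m ≤ β * s ^ 2) (hk : β * s ^ 2 ≤ k)
    (hM : M < 2 * β * p * Real.exp (-k)) :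
    M < 2 * β * (p * Real.exp (-β * s ^ 2)) * (2 * β * s ^ 2 * w - S) := by
  have hfactor : 1 ≤ 2 * β * s ^ 2 * w - S := by
    have := mul_le_mul hm hAw hA (by positivity)
    linarith
  have hexp : Real.exp (-k) ≤ Real.exp (-β * s ^ 2) := Real.exp_le_exp.2 (by linarith)
  calc M < 2 * β * (p * Real.exp (-k)) := by rwa [← mul_assoc]
    _ ≤ 2 * β * (p * Real.exp (-β * s ^ 2)) := by gcongr
    _ ≤ _ := le_mul_of_one_le_right (by positivity) hfactor

variable [NeZero n]

theorem Ma_hess_gaussian_le (ha : ∀ i, 0 ≤ a i) (hβ : 0 ≤ β) (hd : 0 ≤ d) (hx : x ≠ z₀) :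
    Ma a (hess (fun z => c + -d * Real.exp (-β * ‖z - z₀‖ ^ 2)) x) ≤
      -(2 * β * (d * Real.exp (-β * ‖x - z₀‖ ^ 2)) *
        (2 * β * ‖x - z₀‖ ^ 2 * a 0 - ∑ i, a i)) := by
  have h := Ma_le_of_quadForm_le ha (isHermitian_hess (contDiff_gaussian c (-d) β z₀) x)
    (c := 2 * β * (d * Real.exp (-β * ‖x - z₀‖ ^ 2)))
    (d := 2 * β * (d * Real.exp (-β * ‖x - z₀‖ ^ 2)) * (1 - 2 * β * ‖x - z₀‖ ^ 2))
    (fun v => by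
      have : 0 ≤ 2 * β * (d * Real.exp (-β * ‖x - z₀‖ ^ 2)) * (2 * β * inner ℝ (x - z₀) v ^ 2) := by
        positivity
      rw [quadForm_hess_gaussian]
      linarith)
    (sub_ne_zero.2 hx) (by
      rw [quadForm_hess_gaussian, real_inner_self_eq_norm_sq]
      apply le_of_eq
      ring)
  linarith

theorem le_Ma_hess_gaussian (ha : ∀ i, 0 ≤ a i) (hβ : 0 ≤ β) (hd : 0 ≤ d) (hx : x ≠ z₀) :
    2 * β * (d * Real.exp (-β * ‖x - z₀‖ ^ 2)) *
        (2 * β * ‖x - z₀‖ ^ 2 * a (lastIdx n) - ∑ i, a i) ≤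
      Ma a (hess (fun z => c + d * Real.exp (-β * ‖z - z₀‖ ^ 2)) x) := by
  have h := le_Ma_of_le_quadForm ha (isHermitian_hess (contDiff_gaussian c d β z₀) x)
    (c := -(2 * β * (d * Real.exp (-β * ‖x - z₀‖ ^ 2))))
    (d := 2 * β * (d * Real.exp (-β * ‖x - z₀‖ ^ 2)) * (2 * β * ‖x - z₀‖ ^ 2 - 1))
    (fun v => by
      have : 0 ≤ 2 * β * (d * Real.exp (-β * ‖x - z₀‖ ^ 2)) * (2 * β * inner ℝ (x - z₀) v ^ 2) := by
        positivity
      rw [quadForm_hess_gaussian]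
      linarith)
    (sub_ne_zero.2 hx) (by
      rw [quadForm_hess_gaussian, real_inner_self_eq_norm_sq]
      apply le_of_eq
      ring)
  linarith

/- The exponent `α` makes the one large eigenvalue of the Hessian, in the direction `x - z₀`,
outweigh all the others; shrinking the scale `t` then multiplies the Hessian by `t⁻²`. -/
theorem isBarrier_gaussian (ha : ∀ i, 0 ≤ a i) (hα : 0 < α) (hκ : 0 < κ) (hp : 0 < p)
    (hsum : (∑ i, a i) + 1 ≤ 2 * (α * κ ^ 2) * aStar a) (ht : 0 < t) (hz₀ : dist z₀ y = t)
    (hfar : ∀ x ∈ closure Ω, κ * t ≤ dist x z₀)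
    (hM : M * t ^ 2 < 2 * α * p * Real.exp (-(α * 9 ^ 2))) :
    IsBarrier a Ω y (p * (Real.exp (-(α * κ ^ 2)) - Real.exp (-(9 * α)))) M
      (p * (Real.exp (-(α * κ ^ 2)) - Real.exp (-α))) (8 * t)
      fun z => p * Real.exp (-(α * κ ^ 2)) + -p * Real.exp (-(α / t ^ 2) * ‖z - z₀‖ ^ 2) := by
  have hscale (s : ℝ) : α / t ^ 2 * (s * t) ^ 2 = α * s ^ 2 := by field_simp
  have hmono {s s' : ℝ} (hs : 0 ≤ s) (hss' : s ≤ s') : α / t ^ 2 * s ^ 2 ≤ α / t ^ 2 * s' ^ 2 := by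
    gcongr
  have hlower {x : En n} (hx : x ∈ closure Ω) : α * κ ^ 2 ≤ α / t ^ 2 * ‖x - z₀‖ ^ 2 :=
    hscale κ ▸ hmono (by positivity) (dist_eq_norm x z₀ ▸ hfar x hx)
  have hupper {x : En n} (hx : x ∈ ball y (8 * t)) : α / t ^ 2 * ‖x - z₀‖ ^ 2 ≤ α * 9 ^ 2 :=
    hscale 9 ▸ hmono (norm_nonneg _) (by
      rw [← dist_eq_norm]
      linarith [dist_triangle_right x z₀ y, mem_ball.1 hx])
  have hne {x : En n} (hx : x ∈ closure Ω) : x ≠ z₀ := by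
    rintro rfl
    exact (mul_pos hκ ht).not_ge ((hfar x hx).trans_eq (dist_self x))
  have hstrong {x : En n} (hx : x ∈ closure Ω ∩ ball y (8 * t)) {w : ℝ} (hw : aStar a ≤ w) :
      M < 2 * (α / t ^ 2) * (p * Real.exp (-(α / t ^ 2) * ‖x - z₀‖ ^ 2)) *
        (2 * (α / t ^ 2) * ‖x - z₀‖ ^ 2 * w - ∑ i, a i) :=
    lt_gaussian_mul_sub (by positivity) hp (le_min (ha _) (ha _)) hw hsum (hlower hx.1)
      (hupper hx.2) (by
        rw [mul_div_assoc', div_mul_eq_mul_div, div_mul_eq_mul_div]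
        exact (lt_div_iff₀ (by positivity)).2 hM)
  refine ⟨contDiff_gaussian _ _ _ _, ?_, fun x hx => ?_, fun x _ hd => ?_, fun x hx => ?_,
    fun x hx => ?_⟩
  · have hy : -(α / t ^ 2) * ‖y - z₀‖ ^ 2 = -α := by
      rw [← dist_eq_norm, dist_comm, hz₀]
      field_simp
    rw [hy]
    linarith
  · have : Real.exp (-(α / t ^ 2) * ‖x - z₀‖ ^ 2) ≤ Real.exp (-(α * κ ^ 2)) :=
      Real.exp_le_exp.2 (by linarith [hlower hx.1])
    linarith [mul_le_mul_of_nonneg_left this hp.le]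
  · have hdist : 3 * t ≤ ‖x - z₀‖ := by
      rw [← dist_eq_norm]
      linarith [dist_triangle x z₀ y]
    have : Real.exp (-(α / t ^ 2) * ‖x - z₀‖ ^ 2) ≤ Real.exp (-(9 * α)) :=
      Real.exp_le_exp.2 (by linarith [hscale 3, hmono (by positivity) hdist])
    linarith [mul_le_mul_of_nonneg_left this hp.le]
  · exact (Ma_hess_gaussian_le ha (by positivity) hp.le (hne hx.1)).trans_lt
      (neg_lt_neg (hstrong hx (min_le_left _ _)))
  · simp only [neg_add, neg_mul, neg_neg] at hstrong ⊢
    simpa only [neg_mul] using (hstrong hx (min_le_right _ _)).trans_le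
      (by simpa only [neg_mul] using le_Ma_hess_gaussian ha (by positivity) hp.le (hne hx.1))

theorem ExteriorCorkscrewAt.hasBarriersAt (ha : ClassA a) (hy : y ∈ closure Ω)
    (h : ExteriorCorkscrewAt Ω y) : HasBarriersAt a Ω y := by
  intro L hL M
  obtain ⟨κ, hκ, hcork⟩ := h
  have haStar : 0 < aStar a := lt_min ha.2.1 ha.2.2
  have hsum : 0 ≤ ∑ i, a i := Finset.sum_nonneg fun i _ => ha.1 i
  let α := ((∑ i, a i) + 1) / (2 * κ ^ 2 * aStar a)
  have hα : 0 < α := by positivity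
  have hαsum : (∑ i, a i) + 1 ≤ 2 * (α * κ ^ 2) * aStar a := by
    apply le_of_eq
    simp only [α]
    field_simp
  have hκ1 : κ ≤ 1 := by
    obtain ⟨t, ⟨z, hz, hfar⟩, ht : 0 < t⟩ := (hcork.and eventually_mem_nhdsWithin).exists
    exact le_of_mul_le_mul_right (by linarith [hfar y hy, dist_comm y z]) ht
  have hexp9 : Real.exp (-(9 * α)) < Real.exp (-α) := Real.exp_lt_exp.2 (by linarith)
  have hexpκ : Real.exp (-α) ≤ Real.exp (-(α * κ ^ 2)) :=
    Real.exp_le_exp.2 (neg_le_neg (mul_le_of_le_one_right hα.le (pow_le_one₀ hκ.le hκ1)))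
  have hgap : 0 < Real.exp (-(α * κ ^ 2)) - Real.exp (-(9 * α)) := by linarith
  let p := L / (Real.exp (-(α * κ ^ 2)) - Real.exp (-(9 * α)))
  have hp : 0 < p := by positivity
  have hpL : p * (Real.exp (-(α * κ ^ 2)) - Real.exp (-(9 * α))) = L := div_mul_cancel₀ _ hgap.ne'
  have hstrong : ∀ᶠ t in nhdsWithin (0 : ℝ) (Ioi 0),
      M * t ^ 2 < 2 * α * p * Real.exp (-(α * 9 ^ 2)) :=
    mem_nhdsWithin_of_mem_nhds <| (by fun_prop : Continuous fun t : ℝ => M * t ^ 2).tendsto 0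
      |>.eventually_lt_const (by
        rw [zero_pow two_ne_zero, mul_zero]
        positivity)
  refine ⟨p * (Real.exp (-(α * κ ^ 2)) - Real.exp (-α)), ?_, ?_⟩
  · rw [← hpL]
    gcongr
  filter_upwards [eventually_nhdsGT_zero_mul_left (by norm_num : (0 : ℝ) < 8⁻¹)
    (hcork.and (hstrong.and eventually_mem_nhdsWithin))] with r ⟨⟨z, hz, hfar⟩, hM, hr⟩
  have := isBarrier_gaussian ha.1 hα hκ hp hαsum hr hz hfar hM
  rw [hpL, mul_inv_cancel_left₀ (by norm_num : (8 : ℝ) ≠ 0)] at this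
  exact ⟨_, this⟩

theorem sin_mul_le_norm_add_smul_of_mem_coneSet {θ : ℝ} {ξ : En n} (ht : 0 ≤ t)
    (hξ : ξ ∈ coneSet n θ) :
    Real.sin θ * t ≤ ‖ξ + t • EuclideanSpace.single (lastIdx n) (1 : ℝ)‖ := by
  have hcos : ‖ξ‖ * Real.cos θ ≤ ξ (lastIdx n) := hξ
  refine le_of_abs_le (abs_le_of_sq_le_sq ?_ (norm_nonneg _))
  calc (Real.sin θ * t) ^ 2
      ≤ (‖ξ‖ + t * Real.cos θ) ^ 2 + (Real.sin θ * t) ^ 2 := le_add_of_nonneg_left (sq_nonneg _)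
    _ = ‖ξ‖ ^ 2 + 2 * (t * (‖ξ‖ * Real.cos θ)) + t ^ 2 := by
      linear_combination t ^ 2 * Real.sin_sq_add_cos_sq θ
    _ ≤ ‖ξ‖ ^ 2 + 2 * (t * ξ (lastIdx n)) + t ^ 2 := by gcongr
    _ = _ := by
      rw [norm_add_sq_real, inner_smul_right, EuclideanSpace.inner_single_right, norm_smul,
        PiLp.norm_single, norm_one, mul_one, Real.norm_of_nonneg ht, conj_trivial, one_mul]

theorem ExtCone.exteriorCorkscrewAt (h : ExtCone Ω) (hy : y ∈ frontier Ω) :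
    ExteriorCorkscrewAt Ω y := by
  obtain ⟨θ, hθ, r, hr, hcone⟩ := h
  obtain ⟨O, hO⟩ := hcone y hy
  have hsin : 0 < Real.sin θ := Real.sin_pos_of_mem_Ioo hθ
  refine ⟨Real.sin θ, hsin, ?_⟩
  filter_upwards [Ioo_mem_nhdsGT (half_pos hr)] with t ⟨ht, htr⟩
  let e : En n := EuclideanSpace.single (lastIdx n) 1
  have hdist : dist (y - O (t • e)) y = t := by
    rw [dist_eq_norm, sub_sub_cancel_left, norm_neg, O.norm_map, norm_smul,
      PiLp.norm_single, norm_one, mul_one, Real.norm_of_nonneg ht.le]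
  refine ⟨y - O (t • e), hdist, fun x hx => ?_⟩
  by_cases hxr : x ∈ ball y r
  · obtain ⟨ξ, hξ, rfl⟩ := hO ⟨hx, hxr⟩
    rw [dist_eq_norm, add_sub_sub_cancel, ← map_add, O.norm_map]
    exact sin_mul_le_norm_add_smul_of_mem_coneSet ht.le hξ
  · have := mul_le_of_le_one_left ht.le (Real.sin_le_one θ)
    rw [mem_ball, not_lt] at hxr
    linarith [dist_triangle x (y - O (t • e)) y]

end Barrier

section UscEnvelope

variable {X : Type*} {K B : Set X} {u W ψ h : X → ℝ} {x : X} {b c : ℝ}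

/-- The upper semicontinuous envelope of `u` on `K`. -/
noncomputable def uscEnvelope [TopologicalSpace X] (K : Set X) (u : X → ℝ) (x : X) : ℝ :=
  limsup u (nhdsWithin x K)

open Classical in
/-- The function equal to `max W ψ` on `B` and to `W` elsewhere. -/
noncomputable def supOn (B : Set X) (W ψ : X → ℝ) : X → ℝ := B.piecewise (W ⊔ ψ) W

theorem supOn_le_iff : supOn B W ψ x ≤ b ↔ W x ≤ b ∧ (x ∈ B → ψ x ≤ b) := by
  by_cases hx : x ∈ B <;> simp [supOn, hx]

theorem supOn_lt_iff : supOn B W ψ x < b ↔ W x < b ∧ (x ∈ B → ψ x < b) := by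
  by_cases hx : x ∈ B <;> simp [supOn, hx]

theorem supOn_eq_or : supOn B W ψ x = W x ∨ x ∈ B ∧ supOn B W ψ x = ψ x := by
  by_cases hx : x ∈ B <;> simp [supOn, hx, le_total]

variable [TopologicalSpace X]

theorem frequently_nhdsWithin_le_apply (hx : x ∈ K) : ∃ᶠ z in nhdsWithin x K, u x ≤ u z :=
  have h : ∃ᶠ z in pure x, u x ≤ u z := frequently_pure.2 le_rfl
  h.filter_mono (pure_le_nhdsWithin hx)

theorem uscEnvelope_le (hx : x ∈ K) (hu : ∀ᶠ z in nhdsWithin x K, u z ≤ c) :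
    uscEnvelope K u x ≤ c :=
  limsup_le_of_le (.of_frequently_ge (frequently_nhdsWithin_le_apply hx)) hu

theorem isBoundedUnder_nhdsWithin (hu : BddAbove (u '' K)) :
    IsBoundedUnder (· ≤ ·) (nhdsWithin x K) u :=
  hu.imp fun _ hc => eventually_map.2 <| eventually_nhdsWithin_of_forall fun _ hz =>
    hc (mem_image_of_mem u hz)

theorem le_uscEnvelope (hu : BddAbove (u '' K)) (hx : x ∈ K) : u x ≤ uscEnvelope K u x :=
  le_limsup_of_frequently_le (frequently_nhdsWithin_le_apply hx) (isBoundedUnder_nhdsWithin hu)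

theorem upperSemicontinuousOn_uscEnvelope (hu : BddAbove (u '' K)) :
    UpperSemicontinuousOn (uscEnvelope K u) K := by
  intro x _ b hb
  obtain ⟨c, hxc, hcb⟩ := exists_between hb
  filter_upwards [self_mem_nhdsWithin, eventually_eventually_nhdsWithin.2
    (eventually_lt_of_limsup_lt hxc (isBoundedUnder_nhdsWithin hu))] with z hz huz
  exact (uscEnvelope_le hz (huz.mono fun _ => le_of_lt)).trans_lt hcb

theorem uscEnvelope_le_of_continuousAt (hx : x ∈ K) (hh : ContinuousAt h x)
    (hu : ∀ᶠ z in nhdsWithin x K, u z ≤ h z) : uscEnvelope K u x ≤ h x := by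
  refine le_of_forall_gt_imp_ge_of_dense fun c hc => uscEnvelope_le hx ?_
  filter_upwards [hu, mem_nhdsWithin_of_mem_nhds (hh.eventually_lt_const hc)] with z hz hzc
  exact hz.trans hzc.le

theorem upperSemicontinuousOn_supOn (hW : UpperSemicontinuousOn W K)
    (hψ : UpperSemicontinuousOn ψ K)
    (hψW : ∀ x ∈ K \ B, ∀ᶠ z in nhdsWithin x K, z ∈ B → ψ z ≤ W z) :
    UpperSemicontinuousOn (supOn B W ψ) K := by
  intro x hx b hb
  obtain ⟨hWb, hψb⟩ := supOn_lt_iff.1 hb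
  have hψ' : ∀ᶠ z in nhdsWithin x K, z ∈ B → ψ z < b := by
    by_cases hxB : x ∈ B
    · filter_upwards [hψ x hx b (hψb hxB)] with z hz _ using hz
    · filter_upwards [hψW x ⟨hx, hxB⟩, hW x hx b hWb] with z hz hzb hzB
      exact (hz hzB).trans_lt hzb
  filter_upwards [hW x hx b hWb, hψ'] with z hzW hzψ
  exact supOn_lt_iff.2 ⟨hzW, hzψ⟩

end UscEnvelope

section Perron

variable {n : ℕ} {a : Fin n → ℝ} {Ω B K : Set (En n)} {f g u w W H ψ : En n → ℝ} {y : En n}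
  {C M r s : ℝ}

/-- `w` belongs to Perron's family: it is an upper semicontinuous subsolution lying below the
boundary data `g`. -/
structure IsDirichletSubsol (a : Fin n → ℝ) (Ω : Set (En n)) (f g w : En n → ℝ) : Prop where
  upperSemicontinuousOn : UpperSemicontinuousOn w (closure Ω)
  isViscSubsol : IsViscSubsol a Ω f w
  le_boundary : ∀ x ∈ frontier Ω, w x ≤ g x

/-- The pointwise supremum of Perron's family. -/
noncomputable def perronSup (a : Fin n → ℝ) (Ω : Set (En n)) (f g : En n → ℝ) (x : En n) : ℝ :=
  sSup {b | ∃ w, IsDirichletSubsol a Ω f g w ∧ w x = b}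

/-- The candidate solution: the upper semicontinuous envelope of the supremum of Perron's family. -/
noncomputable def perronSol (a : Fin n → ℝ) (Ω : Set (En n)) (f g : En n → ℝ) : En n → ℝ :=
  uscEnvelope (closure Ω) (perronSup a Ω f g)

theorem exists_pos_eventually_add_lt {X : Type*} [TopologicalSpace X] {F G : X → ℝ} {x : X}
    (hF : ContinuousAt F x) (hG : ContinuousAt G x) (h : F x < G x) (c : ℝ) :
    ∃ δ > 0, ∀ᶠ z in nhds x, F z + 2 * δ * c < G z := by
  have hδ : ∀ᶠ δ in nhdsWithin (0 : ℝ) (Ioi 0), F x + 2 * δ * c < G x :=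
    mem_nhdsWithin_of_mem_nhds <|
      (by fun_prop : Continuous fun δ : ℝ => F x + 2 * δ * c).tendsto 0 |>.eventually_lt_const
        (by simpa)
  obtain ⟨δ, hlt, hpos⟩ := (hδ.and self_mem_nhdsWithin).exists
  exact ⟨δ, hpos, (hF.add continuousAt_const).eventually_lt hG hlt⟩

theorem eventually_forall_inter_ball {X : Type*} [PseudoMetricSpace X] {K : Set X} {p : X → Prop}
    {x : X} (h : ∀ᶠ z in nhdsWithin x K, p z) :
    ∀ᶠ r in nhdsWithin (0 : ℝ) (Ioi 0), ∀ z ∈ K ∩ ball x r, p z := by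
  obtain ⟨r, hr, hp⟩ := Metric.mem_nhdsWithin_iff.1 h
  filter_upwards [Ioo_mem_nhdsGT hr] with s hs z hz
  exact hp ⟨ball_subset_ball hs.2.le hz.2, hz.1⟩

theorem isViscSubsol_of_contDiff (ha : ∀ i, 0 ≤ a i) (hΩo : IsOpen Ω) (hψ : ContDiff ℝ 2 ψ)
    (h : ∀ x ∈ Ω, f x ≤ Ma a (hess ψ x)) : IsViscSubsol a Ω f ψ := fun x hx _ hφ hloc =>
  (h x hx).trans (Ma_hess_le_of_isLocalMax_sub ha hψ hφ (hloc.isLocalMax (hΩo.mem_nhds hx)))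

theorem IsViscSubsol.supOn (hW : IsViscSubsol a Ω f W) (hψ : IsViscSubsol a (Ω ∩ B) f ψ) :
    IsViscSubsol a Ω f (supOn B W ψ) := by
  intro x hx φ hφ hloc
  rcases supOn_eq_or (B := B) (W := W) (ψ := ψ) (x := x) with hxW | ⟨hxB, hxψ⟩
  · refine hW x hx φ hφ (hloc.mono fun z hz => ?_)
    linarith [(supOn_le_iff.1 (le_refl (_root_.supOn B W ψ z))).1]
  · refine hψ x ⟨hx, hxB⟩ φ hφ ?_
    filter_upwards [nhdsWithin_mono x inter_subset_left hloc, self_mem_nhdsWithin] with z hz hzB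
    linarith [(supOn_le_iff.1 (le_refl (_root_.supOn B W ψ z))).2 hzB.2]

theorem le_of_strict_supersol (hK : IsCompact K) (hw : UpperSemicontinuousOn w K)
    (hsub : IsViscSubsol a Ω f w) (hH : ContDiff ℝ 2 H)
    (h : ∀ x ∈ K, w x ≤ H x ∨ x ∈ Ω ∧ K ∈ nhdsWithin x Ω ∧ Ma a (hess H x) < f x) :
    ∀ x ∈ K, w x ≤ H x := by
  intro x hx
  obtain ⟨m, hm, hmax⟩ := (hw.add
    (hH.continuous.neg.upperSemicontinuous.upperSemicontinuousOn K)).exists_isMaxOn ⟨x, hx⟩ hK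
  have hmax' : ∀ z ∈ K, w z - H z ≤ w m - H m := fun z hz => by
    have : w z + -H z ≤ w m + -H m := hmax hz
    linarith
  rcases h m hm with hle | ⟨hmΩ, hKm, hlt⟩
  · linarith [hmax' x hx]
  · exact absurd (hsub m hmΩ H hH (mem_of_superset hKm hmax')) hlt.not_ge

theorem IsDirichletSubsol.le_of_strict_supersol (hΩo : IsOpen Ω) (hΩb : Bornology.IsBounded Ω)
    (hw : IsDirichletSubsol a Ω f g w) (hH : ContDiff ℝ 2 H)
    (hstrict : ∀ x ∈ Ω ∩ ball y s, Ma a (hess H x) < f x)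
    (hboundary : ∀ x ∈ frontier Ω ∩ ball y s, g x ≤ H x)
    (hsphere : ∀ x ∈ closure Ω ∩ sphere y s, w x ≤ H x) :
    ∀ x ∈ closure Ω ∩ closedBall y s, w x ≤ H x := by
  refine _root_.le_of_strict_supersol (hΩb.isCompact_closure.inter_right isClosed_closedBall)
    (hw.upperSemicontinuousOn.mono inter_subset_left) hw.isViscSubsol hH fun x ⟨hx, hxs⟩ => ?_
  rcases (mem_closedBall.1 hxs).eq_or_lt with hxs | hxs
  · exact Or.inl (hsphere x ⟨hx, hxs⟩)
  by_cases hxΩ : x ∈ Ω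
  · refine Or.inr ⟨hxΩ, ?_, hstrict x ⟨hxΩ, hxs⟩⟩
    filter_upwards [self_mem_nhdsWithin,
      mem_nhdsWithin_of_mem_nhds (isOpen_ball.mem_nhds hxs)] with z hzΩ hzs
    exact ⟨subset_closure hzΩ, ball_subset_closedBall hzs⟩
  · have hfr : x ∈ frontier Ω := hΩo.frontier_eq ▸ ⟨hx, hxΩ⟩
    exact Or.inl ((hw.le_boundary x hfr).trans (hboundary x ⟨hfr, hxs⟩))

theorem exists_forall_isDirichletSubsol_le (ha : ClassAbar a) (hΩo : IsOpen Ω)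
    (hΩb : Bornology.IsBounded Ω) (hf : ∀ x ∈ Ω, -M ≤ f x) (hg : ∀ x ∈ frontier Ω, g x ≤ C) :
    ∃ D, ∀ w, IsDirichletSubsol a Ω f g w → ∀ x ∈ closure Ω, w x ≤ D := by
  obtain ⟨R, hR⟩ := hΩb.isCompact_closure.isBounded.subset_ball 0
  obtain ⟨k, hk, hMk⟩ : ∃ k ≥ 0, M < 2 * k * ∑ i, a i := by
    refine ⟨(|M| + 1) / ∑ i, a i, div_nonneg (by positivity) ha.sum_pos.le, ?_⟩
    rw [mul_assoc, div_mul_cancel₀ _ ha.sum_pos.ne']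
    linarith [le_abs_self M, abs_nonneg M]
  have hnorm : ∀ x ∈ ball (0 : En n) R, k * ‖x - 0‖ ^ 2 ≤ k * R ^ 2 := fun x hx => by
    have := (mem_ball_iff_norm.1 hx).le
    gcongr
  refine ⟨C + k * R ^ 2, fun w hw x hx => ?_⟩
  have hwH := hw.le_of_strict_supersol hΩo hΩb (y := 0) (s := R)
    (contDiff_paraboloid (C + k * R ^ 2) (-k) 0)
    (fun z hz => by
      rw [Ma_hess_paraboloid ha.1]
      linarith [hf z hz.1])
    (fun z hz => by
      rw [paraboloid]
      linarith [hg z hz.1, hnorm z hz.2])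
    (fun z hz => absurd (hR hz.1) (by simpa using hz.2.ge)) x ⟨hx, ball_subset_closedBall (hR hx)⟩
  rw [paraboloid] at hwH
  nlinarith [sq_nonneg ‖x - 0‖]

theorem exists_continuous_isDirichletSubsol (ha : ClassAbar a) (hΩo : IsOpen Ω)
    (hΩb : Bornology.IsBounded Ω) (hf : ∀ x ∈ Ω, f x ≤ M) (hg : ∀ x ∈ frontier Ω, C ≤ g x) :
    ∃ w, Continuous w ∧ IsDirichletSubsol a Ω f g w := by
  obtain ⟨R, hR⟩ := hΩb.isCompact_closure.isBounded.exists_norm_le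
  let k := |M| / ∑ i, a i
  have hk : 0 ≤ k := div_nonneg (abs_nonneg M) ha.sum_pos.le
  have hMk : M ≤ 2 * k * ∑ i, a i := by
    rw [mul_assoc, div_mul_cancel₀ _ ha.sum_pos.ne']
    linarith [le_abs_self M, abs_nonneg M]
  have hcont := contDiff_paraboloid (C - k * R ^ 2) k (0 : En n)
  refine ⟨_, hcont.continuous, hcont.continuous.upperSemicontinuous.upperSemicontinuousOn _,
    isViscSubsol_of_contDiff ha.1 hΩo hcont fun x hx => ?_, fun x hx => ?_⟩
  · rw [Ma_hess_paraboloid ha.1]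
    exact (hf x hx).trans hMk
  · have hnorm : k * ‖x‖ ^ 2 ≤ k * R ^ 2 := by
      have := hR x (frontier_subset_closure hx)
      gcongr
    rw [paraboloid, sub_zero]
    linarith [hg x hx]

theorem bddAbove_perronSup (hw : IsDirichletSubsol a Ω f g w)
    (hC : ∀ w, IsDirichletSubsol a Ω f g w → ∀ x ∈ closure Ω, w x ≤ C) :
    BddAbove (perronSup a Ω f g '' closure Ω) := by
  refine ⟨C, ?_⟩
  rintro _ ⟨x, hx, rfl⟩
  refine csSup_le ⟨_, w, hw, rfl⟩ ?_
  rintro _ ⟨v, hv, rfl⟩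
  exact hC v hv x hx

theorem IsDirichletSubsol.le_perronSol (hw : IsDirichletSubsol a Ω f g w)
    (hC : ∀ w, IsDirichletSubsol a Ω f g w → ∀ x ∈ closure Ω, w x ≤ C) :
    ∀ x ∈ closure Ω, w x ≤ perronSol a Ω f g x := by
  intro x hx
  have hbdd : BddAbove {b | ∃ w, IsDirichletSubsol a Ω f g w ∧ w x = b} := by
    refine ⟨C, ?_⟩
    rintro _ ⟨v, hv, rfl⟩
    exact hC v hv x hx
  exact (le_csSup hbdd ⟨w, hw, rfl⟩).trans (le_uscEnvelope (bddAbove_perronSup hw hC) hx)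

theorem perronSol_le_of_strict_supersol (hΩo : IsOpen Ω) (hΩb : Bornology.IsBounded Ω)
    (hw : IsDirichletSubsol a Ω f g w)
    (hC : ∀ w, IsDirichletSubsol a Ω f g w → ∀ x ∈ closure Ω, w x ≤ C)
    (hH : ContDiff ℝ 2 H) (hs : 0 < s) (hy : y ∈ closure Ω)
    (hstrict : ∀ x ∈ Ω ∩ ball y s, Ma a (hess H x) < f x)
    (hboundary : ∀ x ∈ frontier Ω ∩ ball y s, g x ≤ H x)
    (hsphere : ∀ x ∈ closure Ω ∩ sphere y s, perronSol a Ω f g x ≤ H x) :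
    perronSol a Ω f g y ≤ H y := by
  refine uscEnvelope_le_of_continuousAt hy hH.continuous.continuousAt ?_
  filter_upwards [self_mem_nhdsWithin, mem_nhdsWithin_of_mem_nhds (closedBall_mem_nhds y hs)]
    with z hz hzs
  refine csSup_le ⟨_, w, hw, rfl⟩ ?_
  rintro _ ⟨v, hv, rfl⟩
  exact hv.le_of_strict_supersol hΩo hΩb hH hstrict hboundary
    (fun x hx => (hv.le_perronSol hC x hx.1).trans (hsphere x hx)) z ⟨hz, hzs⟩

theorem isViscSubsol_perronSol (ha : ∀ i, 0 ≤ a i) (hΩo : IsOpen Ω)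
    (hΩb : Bornology.IsBounded Ω) (hf : ContinuousOn f Ω) (hw : IsDirichletSubsol a Ω f g w)
    (hC : ∀ w, IsDirichletSubsol a Ω f g w → ∀ x ∈ closure Ω, w x ≤ C) :
    IsViscSubsol a Ω f (perronSol a Ω f g) := by
  intro x₀ hx₀ φ hφ hloc
  by_contra! hlt
  have hΩx₀ := hΩo.mem_nhds hx₀
  obtain ⟨δ, hδ, hgap⟩ := exists_pos_eventually_add_lt (continuous_Ma_hess ha hφ).continuousAt
    (hf.continuousAt hΩx₀) hlt (∑ i, a i)
  obtain ⟨r, hr, hball⟩ := nhds_basis_closedBall.eventually_iff.1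
    (hgap.and ((hloc.isLocalMax hΩx₀).and hΩx₀))
  let c := perronSol a Ω f g x₀ - φ x₀ - δ * r ^ 2
  have hle := perronSol_le_of_strict_supersol hΩo hΩb hw hC
    (hφ.add (contDiff_paraboloid c δ x₀)) hr (subset_closure hx₀)
    (fun z hz => by
      rw [Ma_hess_add_paraboloid ha hφ]
      exact (hball (ball_subset_closedBall hz.2)).1)
    (fun z hz => absurd (hball (ball_subset_closedBall hz.2)).2.2 (hΩo.frontier_eq ▸ hz.1).2)
    (fun z hz => by
      have := (hball (sphere_subset_closedBall hz.2)).2.1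
      rw [paraboloid, mem_sphere_iff_norm.1 hz.2]
      linarith)
  rw [paraboloid, sub_self, norm_zero] at hle
  nlinarith [pow_pos hr 2]

theorem HasBarriersAt.exists_barrier_of_lt (hbar : HasBarriersAt a Ω y)
    (hu : UpperSemicontinuousWithinAt u (closure Ω) y)
    (hg : ContinuousWithinAt g (frontier Ω) y) (hlt : g y < u y) (M : ℝ) :
    ∃ H r, ContDiff ℝ 2 H ∧ 0 < r ∧ H y < u y ∧
      (∀ x ∈ frontier Ω ∩ ball y r, g x ≤ H x) ∧
      (∀ x ∈ closure Ω ∩ ball y r, r / 2 ≤ dist x y → u x ≤ H x) ∧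
      (∀ x ∈ closure Ω ∩ ball y r, Ma a (hess H x) < -M) ∧
      ∀ x ∈ closure Ω ∩ ball y r, M < Ma a (hess (fun z => -H z) x) := by
  obtain ⟨γ, hγ, hbar⟩ := hbar (u y - g y) (sub_pos.2 hlt) M
  obtain ⟨ε, hε, hεγ⟩ := exists_between (sub_pos.2 hγ)
  obtain ⟨r, ⟨T, hT⟩, hur, hgr, hr : 0 < r⟩ := (hbar.and
    ((eventually_forall_inter_ball (hu _ (lt_add_of_pos_right (u y) hε))).and
      ((eventually_forall_inter_ball (hg.eventually_lt_const (lt_add_of_pos_right (g y) hε))).and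
        eventually_mem_nhdsWithin))).exists
  refine ⟨fun z => T z + (g y + ε), r, hT.contDiff.add contDiff_const, hr, ?_, fun x hx => ?_,
    fun x hx hd => ?_, fun x hx => ?_, fun x hx => ?_⟩
  · linarith [hT.apply_le]
  · linarith [hgr x hx, hT.nonneg x ⟨frontier_subset_closure hx.1, hx.2⟩]
  · linarith [hur x hx, hT.le_of_le_dist x hx hd]
  · exact hess_add_const T _ ▸ hT.Ma_hess_lt x hx
  · simp only [neg_add]
    exact hess_add_const (fun z => -T z) _ ▸ hT.lt_Ma_hess_neg x hx

theorem perronSol_le_of_hasBarriersAt (hΩo : IsOpen Ω) (hΩb : Bornology.IsBounded Ω)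
    (hf : ∀ x ∈ Ω, -M ≤ f x) (hw : IsDirichletSubsol a Ω f g w)
    (hC : ∀ w, IsDirichletSubsol a Ω f g w → ∀ x ∈ closure Ω, w x ≤ C)
    (hy : y ∈ frontier Ω) (hg : ContinuousWithinAt g (frontier Ω) y)
    (hbar : HasBarriersAt a Ω y) : perronSol a Ω f g y ≤ g y := by
  by_contra! hlt
  have hyc := frontier_subset_closure hy
  obtain ⟨H, r, hH, hr, hHy, hgH, hWH, hstrict, -⟩ := hbar.exists_barrier_of_lt
    (upperSemicontinuousOn_uscEnvelope (bddAbove_perronSup hw hC) y hyc) hg hlt M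
  have hball : closedBall y (r / 2) ⊆ ball y r := closedBall_subset_ball (half_lt_self hr)
  refine hHy.not_ge (perronSol_le_of_strict_supersol hΩo hΩb hw hC hH (half_pos hr) hyc
    (fun x hx => ?_) (fun x hx => ?_) fun x hx => ?_)
  · exact (hstrict x ⟨subset_closure hx.1, hball (ball_subset_closedBall hx.2)⟩).trans_le
      (hf x hx.1)
  · exact hgH x ⟨hx.1, hball (ball_subset_closedBall hx.2)⟩
  · exact hWH x ⟨hx.1, hball (sphere_subset_closedBall hx.2)⟩ (mem_sphere.1 hx.2).ge

theorem IsDirichletSubsol.le_of_maximal (ha : ∀ i, 0 ≤ a i) (hΩo : IsOpen Ω)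
    (hW : IsDirichletSubsol a Ω f g W)
    (hmax : ∀ w, IsDirichletSubsol a Ω f g w → ∀ x ∈ closure Ω, w x ≤ W x)
    (hψ : ContDiff ℝ 2 ψ) (hr : 0 < r) (hsub : ∀ x ∈ Ω ∩ ball y r, f x ≤ Ma a (hess ψ x))
    (hboundary : ∀ x ∈ frontier Ω ∩ ball y r, ψ x ≤ g x)
    (hshell : ∀ x ∈ closure Ω ∩ ball y r, r / 2 ≤ dist x y → ψ x ≤ W x) :
    ∀ x ∈ closure Ω ∩ ball y r, ψ x ≤ W x := by
  have hglue : IsDirichletSubsol a Ω f g (supOn (ball y r) W ψ) := by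
    refine ⟨upperSemicontinuousOn_supOn hW.upperSemicontinuousOn
      (hψ.continuous.upperSemicontinuous.upperSemicontinuousOn _) fun x hx => ?_,
      hW.isViscSubsol.supOn (isViscSubsol_of_contDiff ha (hΩo.inter isOpen_ball) hψ hsub),
      fun x hx => supOn_le_iff.2 ⟨hW.le_boundary x hx, fun hxr => hboundary x ⟨hx, hxr⟩⟩⟩
    have hdist : r / 2 < dist x y := (half_lt_self hr).trans_le (not_lt.1 hx.2)
    filter_upwards [self_mem_nhdsWithin, mem_nhdsWithin_of_mem_nhds
      ((continuous_id.dist continuous_const).continuousAt.eventually_const_lt hdist)]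
      with z hz hzd hzr
    exact hshell z ⟨hz, hzr⟩ hzd.le
  exact fun x hx => (supOn_le_iff.1 (hmax _ hglue x hx.1)).2 hx.2

theorem IsDirichletSubsol.uscEnvelope_neg_le_of_maximal (ha : ∀ i, 0 ≤ a i) (hΩo : IsOpen Ω)
    (hW : IsDirichletSubsol a Ω f g W)
    (hmax : ∀ w, IsDirichletSubsol a Ω f g w → ∀ x ∈ closure Ω, w x ≤ W x)
    (hH : ContDiff ℝ 2 H) (hr : 0 < r) (hy : y ∈ closure Ω)
    (hsub : ∀ x ∈ Ω ∩ ball y r, f x ≤ Ma a (hess (fun z => -H z) x))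
    (hboundary : ∀ x ∈ frontier Ω ∩ ball y r, -g x ≤ H x)
    (hshell : ∀ x ∈ closure Ω ∩ ball y r, r / 2 ≤ dist x y → -W x ≤ H x) :
    uscEnvelope (closure Ω) (fun x => -W x) y ≤ H y := by
  refine uscEnvelope_le_of_continuousAt hy hH.continuous.continuousAt ?_
  filter_upwards [self_mem_nhdsWithin, mem_nhdsWithin_of_mem_nhds (ball_mem_nhds y hr)]
    with z hz hzr
  exact neg_le.1 (hW.le_of_maximal ha hΩo hmax hH.neg hr hsub
    (fun x hx => neg_le.1 (hboundary x hx)) (fun x hx hd => neg_le.1 (hshell x hx hd)) z ⟨hz, hzr⟩)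

theorem IsDirichletSubsol.isViscSupersol_of_maximal (ha : ∀ i, 0 ≤ a i) (hΩo : IsOpen Ω)
    (hf : ContinuousOn f Ω) (hW : IsDirichletSubsol a Ω f g W)
    (hmax : ∀ w, IsDirichletSubsol a Ω f g w → ∀ x ∈ closure Ω, w x ≤ W x)
    (hbdd : BddAbove ((fun x => -W x) '' closure Ω)) :
    IsViscSupersol a Ω f fun x => -uscEnvelope (closure Ω) (fun x => -W x) x := by
  intro x₀ hx₀ φ hφ hloc
  by_contra! hlt
  have hΩx₀ := hΩo.mem_nhds hx₀
  obtain ⟨δ, hδ, hgap⟩ := exists_pos_eventually_add_lt (hf.continuousAt hΩx₀)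
    (continuous_Ma_hess ha hφ).continuousAt hlt (∑ i, a i)
  obtain ⟨r, hr, hball⟩ := Metric.eventually_nhds_iff_ball.1
    (hgap.and ((hloc.isLocalMin hΩx₀).and hΩx₀))
  set V := uscEnvelope (closure Ω) (fun x => -W x)
  obtain ⟨c, hc⟩ : ∃ c, c = δ * (r / 2) ^ 2 - V x₀ - φ x₀ := ⟨_, rfl⟩
  have hle : V x₀ ≤ -(φ x₀ + paraboloid c (-δ) x₀ x₀) := hW.uscEnvelope_neg_le_of_maximal
    ha hΩo hmax (H := fun z => -(φ z + paraboloid c (-δ) x₀ z))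
    (hφ.add (contDiff_paraboloid c (-δ) x₀)).neg hr (subset_closure hx₀)
    (fun z hz => by
      simp only [neg_neg]
      rw [Ma_hess_add_paraboloid ha hφ]
      linarith [(hball z hz.2).1])
    (fun z hz => absurd (hball z hz.2).2.2 (hΩo.frontier_eq ▸ hz.1).2)
    (fun z hz hd => by
      have hmin : -V x₀ - φ x₀ ≤ -V z - φ z := (hball z hz.2).2.1
      have hWV : -W z ≤ V z := le_uscEnvelope hbdd hz.1
      have hsq : δ * (r / 2) ^ 2 ≤ δ * ‖z - x₀‖ ^ 2 := by
        rw [← dist_eq_norm]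
        gcongr
      rw [paraboloid]
      linarith)
  rw [paraboloid, sub_self, norm_zero] at hle
  nlinarith [pow_pos hr 2]

theorem IsDirichletSubsol.uscEnvelope_neg_le_of_hasBarriersAt (ha : ∀ i, 0 ≤ a i)
    (hΩo : IsOpen Ω) (hf : ∀ x ∈ Ω, f x ≤ M) (hW : IsDirichletSubsol a Ω f g W)
    (hmax : ∀ w, IsDirichletSubsol a Ω f g w → ∀ x ∈ closure Ω, w x ≤ W x)
    (hbdd : BddAbove ((fun x => -W x) '' closure Ω)) (hy : y ∈ frontier Ω)
    (hg : ContinuousWithinAt g (frontier Ω) y) (hbar : HasBarriersAt a Ω y) :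
    uscEnvelope (closure Ω) (fun x => -W x) y ≤ -g y := by
  by_contra! hlt
  have hyc := frontier_subset_closure hy
  obtain ⟨H, r, hH, hr, hHy, hgH, hVH, -, hstrict⟩ := hbar.exists_barrier_of_lt
    (upperSemicontinuousOn_uscEnvelope hbdd y hyc) hg.neg hlt M
  exact hHy.not_ge (hW.uscEnvelope_neg_le_of_maximal ha hΩo hmax hH hr hyc
    (fun x hx => (hf x hx.1).trans (hstrict x ⟨subset_closure hx.1, hx.2⟩).le) hgH
    fun x hx hd => (le_uscEnvelope hbdd hx.1).trans (hVH x hx hd))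

theorem perronSol_isDirichletSubsol (ha : ∀ i, 0 ≤ a i) (hΩo : IsOpen Ω)
    (hΩb : Bornology.IsBounded Ω) (hf : ContinuousOn f Ω) (hfM : ∀ x ∈ Ω, -M ≤ f x)
    (hg : ContinuousOn g (frontier Ω)) (hbar : ∀ y ∈ frontier Ω, HasBarriersAt a Ω y)
    (hw : IsDirichletSubsol a Ω f g w)
    (hC : ∀ w, IsDirichletSubsol a Ω f g w → ∀ x ∈ closure Ω, w x ≤ C) :
    IsDirichletSubsol a Ω f g (perronSol a Ω f g) where
  upperSemicontinuousOn := upperSemicontinuousOn_uscEnvelope (bddAbove_perronSup hw hC)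
  isViscSubsol := isViscSubsol_perronSol ha hΩo hΩb hf hw hC
  le_boundary y hy := perronSol_le_of_hasBarriersAt hΩo hΩb hfM hw hC hy (hg y hy) (hbar y hy)

theorem exists_maximal_isDirichletSubsol (ha : ClassAbar a) (hΩo : IsOpen Ω)
    (hΩb : Bornology.IsBounded Ω) (hf : ContinuousOn f Ω) (hfM : ∀ x ∈ Ω, |f x| ≤ M)
    (hg : ContinuousOn g (frontier Ω)) (hbar : ∀ y ∈ frontier Ω, HasBarriersAt a Ω y) :
    ∃ W, IsDirichletSubsol a Ω f g W ∧ BddAbove ((fun x => -W x) '' closure Ω) ∧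
      ∀ w, IsDirichletSubsol a Ω f g w → ∀ x ∈ closure Ω, w x ≤ W x := by
  have hfr : IsCompact (frontier Ω) :=
    hΩb.isCompact_closure.of_isClosed_subset isClosed_frontier frontier_subset_closure
  obtain ⟨A, hA⟩ := hfr.bddAbove_image hg
  obtain ⟨B, hB⟩ := hfr.bddBelow_image hg
  have hfM' : ∀ x ∈ Ω, -M ≤ f x := fun x hx => (abs_le.1 (hfM x hx)).1
  obtain ⟨C, hC⟩ := exists_forall_isDirichletSubsol_le ha hΩo hΩb hfM'
    fun x hx => hA (mem_image_of_mem g hx)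
  obtain ⟨w, hwc, hw⟩ := exists_continuous_isDirichletSubsol ha hΩo hΩb
    (fun x hx => (abs_le.1 (hfM x hx)).2) fun x hx => hB (mem_image_of_mem g hx)
  obtain ⟨D, hD⟩ := hΩb.isCompact_closure.bddAbove_image hwc.neg.continuousOn
  refine ⟨perronSol a Ω f g, perronSol_isDirichletSubsol ha.1 hΩo hΩb hf hfM' hg hbar hw hC,
    ⟨D, ?_⟩, fun w hw => hw.le_perronSol hC⟩
  rintro _ ⟨x, hx, rfl⟩
  exact (neg_le_neg (hw.le_perronSol hC x hx)).trans (hD (mem_image_of_mem _ hx))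

theorem IsDirichletSubsol.eq_neg_uscEnvelope_of_maximal (ha : ClassAbar a) (hΩo : IsOpen Ω)
    (hΩb : Bornology.IsBounded Ω) (hf : ContinuousOn f Ω) (hfM : ∀ x ∈ Ω, f x ≤ M)
    (hg : ContinuousOn g (frontier Ω)) (hbar : ∀ y ∈ frontier Ω, HasBarriersAt a Ω y)
    (hW : IsDirichletSubsol a Ω f g W) (hbdd : BddAbove ((fun x => -W x) '' closure Ω))
    (hmax : ∀ w, IsDirichletSubsol a Ω f g w → ∀ x ∈ closure Ω, w x ≤ W x) :
    EqOn W (fun x => -uscEnvelope (closure Ω) (fun x => -W x) x) (closure Ω) := by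
  have hboundary : ∀ y ∈ frontier Ω, W y + uscEnvelope (closure Ω) (fun x => -W x) y ≤ 0 :=
    fun y hy => by
      linarith [hW.le_boundary y hy, hW.uscEnvelope_neg_le_of_hasBarriersAt ha.1 hΩo hfM hmax hbdd
        hy (hg y hy) (hbar y hy)]
  intro x hx
  have hle := comparison ha hΩo hΩb hf hW.upperSemicontinuousOn
    (upperSemicontinuousOn_uscEnvelope hbdd) hW.isViscSubsol
    (hW.isViscSupersol_of_maximal ha.1 hΩo hf hmax hbdd) hboundary x hx
  have hge : -W x ≤ uscEnvelope (closure Ω) (fun x => -W x) x := le_uscEnvelope hbdd hx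
  linarith

theorem IsViscSupersol.congr (hu : IsViscSupersol a Ω f u) (h : EqOn w u Ω) :
    IsViscSupersol a Ω f w := fun x hx φ hφ hloc =>
  hu x hx φ hφ <| hloc.congr (by
    filter_upwards [self_mem_nhdsWithin] with z hz
    rw [h hz]) hx

theorem exists_isViscSolution_of_hasBarriersAt (ha : ClassAbar a) (hΩo : IsOpen Ω)
    (hΩb : Bornology.IsBounded Ω) (hf : ContinuousOn f Ω) (hfM : ∀ x ∈ Ω, |f x| ≤ M)
    (hg : ContinuousOn g (frontier Ω)) (hbar : ∀ y ∈ frontier Ω, HasBarriersAt a Ω y) :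
    ∃ u, ContinuousOn u (closure Ω) ∧ IsViscSubsol a Ω f u ∧ IsViscSupersol a Ω f u ∧
      EqOn u g (frontier Ω) := by
  obtain ⟨W, hW, hbdd, hmax⟩ := exists_maximal_isDirichletSubsol ha hΩo hΩb hf hfM hg hbar
  have hfM' : ∀ x ∈ Ω, f x ≤ M := fun x hx => (abs_le.1 (hfM x hx)).2
  have heq := hW.eq_neg_uscEnvelope_of_maximal ha hΩo hΩb hf hfM' hg hbar hbdd hmax
  refine ⟨W, continuousOn_iff_lower_upperSemicontinuousOn.2 ⟨?_, hW.upperSemicontinuousOn⟩,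
    hW.isViscSubsol, (hW.isViscSupersol_of_maximal ha.1 hΩo hf hmax hbdd).congr
      (heq.mono subset_closure), fun y hy => (hW.le_boundary y hy).antisymm ?_⟩
  · intro x hx b hb
    have : uscEnvelope (closure Ω) (fun x => -W x) x < -b := by
      linarith [heq hx]
    filter_upwards [upperSemicontinuousOn_uscEnvelope hbdd x hx _ this, self_mem_nhdsWithin]
      with z hz hzΩ
    linarith [heq hzΩ]
  · linarith [heq (frontier_subset_closure hy), hW.uscEnvelope_neg_le_of_hasBarriersAt ha.1 hΩo
      hfM' hmax hbdd hy (hg y hy) (hbar y hy)]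

end Perron

theorem dirichlet_existence_uniqueness_general {n : ℕ} {a : Fin n → ℝ} (ha : ClassAbar a)
    {Ω : Set (En n)} (hΩo : IsOpen Ω) (hΩb : Bornology.IsBounded Ω)
    (hbar : ∀ y ∈ frontier Ω, HasBarriersAt a Ω y)
    {g : En n → ℝ} (hg : ContinuousOn g (frontier Ω))
    {f : En n → ℝ} (hf : ContinuousOn f Ω) (hfb : ∃ K, ∀ x ∈ Ω, |f x| ≤ K) :
    ∃ u : En n → ℝ,
      (ContinuousOn u (closure Ω) ∧ IsViscSubsol a Ω f u ∧ IsViscSupersol a Ω f u ∧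
        EqOn u g (frontier Ω)) ∧
      ∀ v : En n → ℝ,
        (ContinuousOn v (closure Ω) ∧ IsViscSubsol a Ω f v ∧ IsViscSupersol a Ω f v ∧
          EqOn v g (frontier Ω)) →
        EqOn v u (closure Ω) := by
  obtain ⟨K, hK⟩ := hfb
  obtain ⟨u, hu, husub, husup, hug⟩ :=
    exists_isViscSolution_of_hasBarriersAt ha hΩo hΩb hf hK hg hbar
  refine ⟨u, ⟨hu, husub, husup, hug⟩, fun v ⟨hv, hvsub, hvsup, hvg⟩ x hx => le_antisymm ?_ ?_⟩
  · exact comparison_of_continuousOn ha hΩo hΩb hf hv hu hvsub husup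
      (fun y hy => (hvg.trans hug.symm hy).le) x hx
  · exact comparison_of_continuousOn ha hΩo hΩb hf hu hv husub hvsup
      (fun y hy => (hug.trans hvg.symm hy).le) x hx

/-- **Existence and uniqueness for the Dirichlet problem (Theorem 3.4).** Let `Ω ⊆ ℝⁿ` be
bounded open with a uniform exterior cone condition, `g` continuous on `∂Ω`, `f`
continuous and bounded in `Ω`, and `M_a ∈ 𝒜`. Then the Dirichlet problem
`M_a(D²u) = f` in `Ω`, `u = g` on `∂Ω`, has a unique viscosity solution `u ∈ C(Ω̄)`. -/
theorem dirichlet_existence_uniqueness (n : ℕ) [NeZero n] (a : Fin n → ℝ) (ha : ClassA a)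
    (Ω : Set (En n)) (hΩo : IsOpen Ω) (hΩb : Bornology.IsBounded Ω) (hcone : ExtCone Ω)
    (g : En n → ℝ) (hg : ContinuousOn g (frontier Ω))
    (f : En n → ℝ) (hf : ContinuousOn f Ω) (hfb : ∃ K, ∀ x ∈ Ω, |f x| ≤ K) :
    ∃ u : En n → ℝ,
      (ContinuousOn u (closure Ω) ∧ IsViscSubsol a Ω f u ∧ IsViscSupersol a Ω f u ∧
        Set.EqOn u g (frontier Ω)) ∧
      ∀ v : En n → ℝ,
        (ContinuousOn v (closure Ω) ∧ IsViscSubsol a Ω f v ∧ IsViscSupersol a Ω f v ∧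
          Set.EqOn v g (frontier Ω)) →
        Set.EqOn v u (closure Ω) :=
  dirichlet_existence_uniqueness_general ⟨ha.1, 0, ha.2.1⟩ hΩo hΩb (fun _ hy =>
    (hcone.exteriorCorkscrewAt hy).hasBarriersAt ha (frontier_subset_closure hy)) hg hf hfb
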